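/- Large Deviation Theorem for exterior powers: Under the same hypotheses as the Large Deviation Theorem (ω Diophantine with ‖nω‖_{ℝ/ℤ} ≥ c(ω)/(n(log n)^a) for all n ≥ 2, A continuous on 𝕋 × ℰ with values in GL(d,K), analytic in x uniformly in E), for every 1 ≤ p ≤ d there exist positive constants c, C, b depending only on A and ω such that for every δ > 0, every E ∈ ℰ and every n ≥ 2, the Lebesgue measure of {x ∈ 𝕋 : |(1/n)log‖Λ^p A^{(n)}_x(E)‖ − Σ_{i=1}^{p} λ_{i,n}(E)| > δ} is less than exp(−cδ²n + C(log n)^b). -/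

import Mathlib

/-!
Fix `e` and `n`, and write `L x = log ‖Λ^p A^{(n)}_x‖`. Three properties of `L` suffice for the large
deviation estimate. First, `|L| = O(n)`, because `A` and `A⁻¹` are bounded. Second, `L` is almost
invariant, `|L (x + ω) - L x| = O(1)`, because `A^{(n)}_{x+ω}` differs from `A^{(n)}_x` by one factor
at either end. Third, `exp L` is comparable, with constants independent of `n`, to the maximum of
the absolute values of the `p × p` minors of `A^{(n)}_x`, and these extend to holomorphic
`1`-periodic functions of size `exp (O(n))` on a fixed strip. All three follow from the multilinear
expansion `det_submatrix_mul` of the minors of a product. The rest, `scalar_ldt`, is a statement about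
such functions `L`.

Truncating Fourier series (`trig_approx`, `exists_polynomials`) replaces the holomorphic functions by
polynomials in `e^{2πix}` of degree `D = O(n)`. For one polynomial `f`, `poly_bounds` compares the
product of `|f|` along an orbit segment of length `K` with the `K`-th power of its Mahler measure: the
product is never larger by more than a factor `exp (O(D (1 + log K)^{a+2}))`, and off the
`κ`-neighbourhoods of the roots it is not smaller by more than this factor times `κ^{-D}`. Factoring `f`
reduces this to linear polynomials (`prod_dist_bounds`), where the expansion of the logarithm leads to
exponential sums over the orbit, bounded by the small divisor estimates `sum_small_divisors` and
`sum_small_divisors_weighted`. These two rest on the separation of the points `mω` modulo `1` which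
the Diophantine condition provides.

The maximum of several polynomials is handled by selection: given the start `x₀` of an orbit segment,
some linear combination with coefficients in `[0, 1]` is comparable to the maximum at all `K` points of
the segment (`select_family`), while at every other point it is bounded above by the maximum. Hence the
orbit sum of `L` at `x₀` exceeds the orbit sum at most other points by little (`orbit_core`).
Averaging over one of the two points gives upper and lower deviation bounds of the orbit sums from
`K ∫ L` (`orbit_deviation`). Finally, almost invariance shows that for `K` a small multiple of `δ n` the
average of `L` over an orbit segment of length `K` is within `δ n / 4` of `L` itself. With `κ = exp (-λ)`
and `λ` of order `δ K ~ δ² n`, the exceptional set has measure at most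
`exp (-c δ² n + C (log n)^{a+2})`.
-/

open MeasureTheory

noncomputable section

/-- The canonical embedding of `K` (= ℝ or ℂ) into `ℂ`. -/
def rcToComplex {K : Type*} [RCLike K] (z : K) : ℂ := ⟨RCLike.re z, RCLike.im z⟩

/-- The operator norm of a matrix, viewed as an operator between Euclidean (ℓ²) spaces. -/
def matOpNorm {K : Type*} [RCLike K] {m n : Type*} [Fintype m] [Fintype n] [DecidableEq n]
    (M : Matrix m n K) : ℝ :=
  ‖LinearMap.toContinuousLinearMap (Matrix.toEuclideanLin M)‖

/-- The cocycle products `A^{(n)}_x(E) = A(x+nω,E)⋯A(x+2ω,E)A(x+ω,E)`. -/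
def cocycle {K : Type*} [RCLike K] {d : ℕ} {ε : Type*}
    (A : ℝ → ε → Matrix (Fin d) (Fin d) K) (ω : ℝ) (n : ℕ) (x : ℝ) (e : ε) :
    Matrix (Fin d) (Fin d) K :=
  ((List.range n).reverse.map (fun j => A (x + (j + 1 : ℕ) * ω) e)).prod

/-- The `p`-th exterior power (compound matrix): the matrix of all `p × p` minors,
indexed by `p`-element subsets of the index set. -/
def compound {K : Type*} [RCLike K] {d : ℕ} (p : ℕ) (M : Matrix (Fin d) (Fin d) K) :
    Matrix {s : Finset (Fin d) // s.card = p} {s : Finset (Fin d) // s.card = p} K :=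
  fun s t =>
    (M.submatrix (fun i => (s.1.orderIsoOfFin s.2 i : Fin d))
      (fun i => (t.1.orderIsoOfFin t.2 i : Fin d))).det

/-- `Σ_{i=1}^p λ_{i,n}(E) = (1/n) ∫_𝕋 log ‖Λ^p A^{(n)}_x(E)‖ dx`. -/
def sumLyapFin {K : Type*} [RCLike K] {d : ℕ} {ε : Type*}
    (A : ℝ → ε → Matrix (Fin d) (Fin d) K) (ω : ℝ) (p n : ℕ) (e : ε) : ℝ :=
  (1 / n : ℝ) * ∫ x in (0:ℝ)..1, Real.log (matOpNorm (compound p (cocycle A ω n x e)))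

/-- The finite-scale Lyapunov exponents `λ_{i,n}(E)` (for `1 ≤ i ≤ d`). -/
def lyapFin {K : Type*} [RCLike K] {d : ℕ} {ε : Type*}
    (A : ℝ → ε → Matrix (Fin d) (Fin d) K) (ω : ℝ) (i n : ℕ) (e : ε) : ℝ :=
  sumLyapFin A ω i n e - sumLyapFin A ω (i - 1) n e

/-- `Σ_{i=1}^p λ_i(E) = lim_n Σ_{i=1}^p λ_{i,n}(E)`; by subadditivity the limit
is the infimum over the scales `n ≥ 1`. -/
def sumLyap {K : Type*} [RCLike K] {d : ℕ} {ε : Type*}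
    (A : ℝ → ε → Matrix (Fin d) (Fin d) K) (ω : ℝ) (p : ℕ) (e : ε) : ℝ :=
  ⨅ n : ℕ, sumLyapFin A ω p (n + 1) e

/-- The Lyapunov exponents `λ_i(E) = lim_n λ_{i,n}(E)` (for `1 ≤ i ≤ d`). -/
def lyap {K : Type*} [RCLike K] {d : ℕ} {ε : Type*}
    (A : ℝ → ε → Matrix (Fin d) (Fin d) K) (ω : ℝ) (i : ℕ) (e : ε) : ℝ :=
  sumLyap A ω i e - sumLyap A ω (i - 1) e

/-- The Diophantine condition `‖nω‖_{ℝ/ℤ} ≥ c(ω) / (n (log n)^a)` for all `n ≥ 2`. -/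
def Diophantine (ω a : ℝ) : Prop :=
  ∃ cω > (0:ℝ), ∀ n : ℕ, 2 ≤ n → ∀ k : ℤ,
    cω / (n * Real.log n ^ a) ≤ |(n : ℝ) * ω - k|

/-- `x ↦ A(x,E)` is analytic, uniformly in `E`: identifying the torus `𝕋 = ℝ/ℤ` with the
unit circle, `A(·,E)` extends holomorphically to a fixed annulus around the circle
(equivalently, to a fixed `1`-periodic strip `{|Im z| < ρ}`), with a uniform bound. -/
def AnalyticOnStrip {K : Type*} [RCLike K] {d : ℕ} {ε : Type*}
    (A : ℝ → ε → Matrix (Fin d) (Fin d) K) : Prop :=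
  ∃ ρ > (0:ℝ), ∃ F : ℂ → ε → Matrix (Fin d) (Fin d) ℂ,
    (∀ e i j, DifferentiableOn ℂ (fun z => F z e i j) {z : ℂ | |z.im| < ρ}) ∧
    (∀ z e, F (z + 1) e = F z e) ∧
    (∀ (x : ℝ) (e : ε), F (x : ℂ) e = (A x e).map rcToComplex) ∧
    (∃ M : ℝ, ∀ z ∈ {z : ℂ | |z.im| < ρ}, ∀ e, matOpNorm (F z e) ≤ M)

/-! ### Small divisors -/

/-- The point `e^{2πit}` of the unit circle. -/
def circ (t : ℝ) : ℂ := Complex.exp (Complex.I * ((2 * Real.pi * t : ℝ) : ℂ))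

lemma norm_circ (t : ℝ) : ‖circ t‖ = 1 := by
  rw [circ, mul_comm, Complex.norm_exp_ofReal_mul_I]

lemma circ_ne_zero (t : ℝ) : circ t ≠ 0 := Complex.exp_ne_zero _

lemma circ_add (s t : ℝ) : circ (s + t) = circ s * circ t := by
  simp only [circ]
  rw [← Complex.exp_add]
  congr 1
  push_cast
  ring

lemma circ_int (k : ℤ) : circ k = 1 := by
  rw [circ, Complex.exp_eq_one_iff]
  exact ⟨k, by push_cast; ring⟩

lemma circ_zero : circ 0 = 1 := by simpa using circ_int 0

lemma circ_neg (t : ℝ) : circ (-t) = (circ t)⁻¹ := by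
  have h := circ_add t (-t)
  rw [add_neg_cancel, circ_zero] at h
  exact eq_inv_of_mul_eq_one_right h.symm

lemma circ_nat_mul (m : ℕ) (t : ℝ) : circ (m * t) = circ t ^ m := by
  rw [circ, circ, ← Complex.exp_nat_mul]
  congr 1
  push_cast
  ring

lemma circ_int_mul (m : ℤ) (t : ℝ) : circ (m * t) = circ t ^ m := by
  rw [circ, circ, ← Complex.exp_int_mul]
  congr 1
  push_cast
  ring

lemma continuous_circ : Continuous circ := by
  unfold circ
  fun_prop

lemma four_mul_le_norm_one_sub_circ (t : ℝ) : 4 * |t - round t| ≤ ‖1 - circ t‖ := by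
  have h1 : circ t = circ (t - round t) := by
    rw [sub_eq_add_neg, circ_add, show (-(round t : ℝ)) = ((-round t : ℤ) : ℝ) by push_cast; ring,
      circ_int, mul_one]
  rw [h1, norm_sub_rev, circ, Complex.norm_exp_I_mul_ofReal_sub_one, norm_mul, Real.norm_eq_abs,
    Real.norm_eq_abs, abs_two]
  have h2 : |t - round t| ≤ 1 / 2 := abs_sub_round t
  have h3 : 2 * Real.pi * (t - round t) / 2 = Real.pi * (t - round t) := by ring
  have h4 : |Real.pi * (t - round t)| ≤ Real.pi / 2 := by
    rw [abs_mul, abs_of_pos Real.pi_pos]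
    nlinarith [Real.pi_pos]
  have h5 := Real.mul_abs_le_abs_sin h4
  rw [abs_mul, abs_of_pos Real.pi_pos, ← mul_assoc, div_mul_cancel₀ _ Real.pi_pos.ne'] at h5
  rw [h3]
  linarith

/-- The Diophantine condition with `1 + log m` in place of `log m`, which makes it meaningful for
`m = 1` too; the bound at `m = 1` comes from the one at `m = 2`. -/
lemma dio_lower {ω a : ℝ} (ha : 1 < a) (h : Diophantine ω a) :
    ∃ c0 > (0:ℝ), c0 ≤ 1 ∧ ∀ m : ℕ, 1 ≤ m → ∀ k : ℤ,
      c0 / (m * (1 + Real.log m) ^ a) ≤ |(m : ℝ) * ω - k| := by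
  obtain ⟨c, hc, h⟩ := h
  have hl2 : 0 < Real.log 2 := Real.log_pos (by norm_num)
  have hl2a : 0 < Real.log 2 ^ a := Real.rpow_pos_of_pos hl2 a
  refine ⟨min 1 (min c (c / (4 * Real.log 2 ^ a))), by positivity, min_le_left _ _, ?_⟩
  intro m hm k
  rcases hm.lt_or_eq with hm2 | rfl
  · refine le_trans ?_ (h m hm2 k)
    have hm0 : (0:ℝ) < m := by positivity
    have hlm : 0 < Real.log m := Real.log_pos (by exact_mod_cast hm2)
    have : Real.log m ^ a ≤ (1 + Real.log m) ^ a :=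
      Real.rpow_le_rpow hlm.le (by linarith) (by linarith)
    have h0 : 0 < Real.log m ^ a := Real.rpow_pos_of_pos hlm a
    gcongr
    exact (min_le_right _ _).trans (min_le_left _ _)
  · have h2 := h 2 le_rfl (2 * k)
    push_cast at h2
    rw [show (2 * ω - 2 * (k:ℝ)) = 2 * (ω - k) by ring, abs_mul, abs_two] at h2
    simp only [Nat.cast_one, Real.log_one, add_zero, Real.one_rpow, mul_one, div_one, one_mul]
    calc _ ≤ c / (4 * Real.log 2 ^ a) := (min_le_right _ _).trans (min_le_right _ _)
      _ = (c / (2 * Real.log 2 ^ a)) / 2 := by field_simp; norm_num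
      _ ≤ _ := by linarith

/-- If the multiples `θ, 2θ, …, Mθ` stay `κ`-away from the integers, then their fractional parts lie
in distinct cells `[bκ, (b+1)κ)` with `b ≥ 1`, so the sum of reciprocals is at most a harmonic sum. -/
lemma sum_inv_fract_le {θ κ : ℝ} {M : ℕ} (hκ : 0 < κ) (hκ1 : κ ≤ 1)
    (h : ∀ m : ℕ, 1 ≤ m → m ≤ M → ∀ k : ℤ, κ ≤ |(m : ℝ) * θ - k|) :
    ∑ m ∈ Finset.Icc 1 M, 1 / Int.fract ((m:ℝ) * θ) ≤ 1 / κ * (1 + Real.log (1 / κ)) := by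
  set b : ℕ → ℕ := fun m => ⌊Int.fract ((m:ℝ) * θ) / κ⌋₊ with hb
  have hfr : ∀ m ∈ Finset.Icc 1 M, κ ≤ Int.fract ((m:ℝ) * θ) := by
    intro m hm
    rw [Finset.mem_Icc] at hm
    have := h m hm.1 hm.2 ⌊(m:ℝ) * θ⌋
    rwa [show (m:ℝ) * θ - ⌊(m:ℝ) * θ⌋ = Int.fract ((m:ℝ) * θ) from rfl,
      abs_of_nonneg (Int.fract_nonneg _)] at this
  have hb1 : ∀ m ∈ Finset.Icc 1 M, b m ∈ Finset.Icc 1 ⌊1 / κ⌋₊ := by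
    intro m hm
    rw [Finset.mem_Icc]
    constructor
    · apply Nat.le_floor
      rw [Nat.cast_one, le_div_iff₀ hκ, one_mul]
      exact hfr m hm
    · apply Nat.floor_le_floor
      have := (Int.fract_lt_one ((m:ℝ) * θ)).le
      gcongr
  have hbl : ∀ m : ℕ, κ * b m ≤ Int.fract ((m:ℝ) * θ) := by
    intro m
    have := Nat.floor_le (div_nonneg (Int.fract_nonneg ((m:ℝ) * θ)) hκ.le)
    rw [le_div_iff₀ hκ] at this
    simp only [hb]
    linarith
  have hbu : ∀ m : ℕ, Int.fract ((m:ℝ) * θ) < κ * (b m + 1) := by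
    intro m
    have := Nat.lt_floor_add_one (Int.fract ((m:ℝ) * θ) / κ)
    rw [div_lt_iff₀ hκ] at this
    simp only [hb]
    linarith
  have key : ∀ m m' : ℕ, m < m' → m' ≤ M → b m ≠ b m' := by
    intro m m' hlt hM heq
    have h1 := h (m' - m) (by omega) (by omega) (⌊(m':ℝ) * θ⌋ - ⌊(m:ℝ) * θ⌋)
    have h2 : ((m' - m : ℕ) : ℝ) * θ - ((⌊(m':ℝ) * θ⌋ - ⌊(m:ℝ) * θ⌋ : ℤ) : ℝ)
        = Int.fract ((m':ℝ) * θ) - Int.fract ((m:ℝ) * θ) := by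
      rw [Nat.cast_sub hlt.le, Int.fract, Int.fract]
      push_cast
      ring
    rw [h2] at h1
    have a1 := hbl m
    have a2 := hbl m'
    have a3 := hbu m
    have a4 := hbu m'
    rw [heq] at a1 a3
    have : |Int.fract ((m':ℝ) * θ) - Int.fract ((m:ℝ) * θ)| < κ := by
      rw [abs_lt]
      constructor <;> linarith
    linarith
  have hinj : Set.InjOn b (Finset.Icc 1 M : Finset ℕ) := by
    intro m hm m' hm' heq
    simp only [Finset.coe_Icc, Set.mem_Icc] at hm hm'
    rcases lt_trichotomy m m' with hlt | he | hlt
    · exact absurd heq (key m m' hlt hm'.2)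
    · exact he
    · exact absurd heq.symm (key m' m hlt hm.2)
  calc ∑ m ∈ Finset.Icc 1 M, 1 / Int.fract ((m:ℝ) * θ)
      ≤ ∑ m ∈ Finset.Icc 1 M, 1 / κ * ((b m : ℝ))⁻¹ := by
        apply Finset.sum_le_sum
        intro m hm
        have hb0 : (0:ℝ) < b m := by
          have := (Finset.mem_Icc.1 (hb1 m hm)).1
          exact_mod_cast this
        rw [one_div κ, ← mul_inv, ← one_div]
        exact one_div_le_one_div_of_le (by positivity) (hbl m)
    _ = 1 / κ * ∑ j ∈ (Finset.Icc 1 M).image b, ((j : ℝ))⁻¹ := by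
        rw [← Finset.mul_sum, Finset.sum_image hinj]
    _ ≤ 1 / κ * ∑ j ∈ Finset.Icc 1 ⌊1 / κ⌋₊, ((j : ℝ))⁻¹ := by
        gcongr
        intro j hj
        obtain ⟨m, hm, rfl⟩ := Finset.mem_image.1 hj
        exact hb1 m hm
    _ ≤ 1 / κ * (1 + Real.log (1 / κ)) := by
        gcongr
        have := harmonic_le_one_add_log ⌊1 / κ⌋₊
        rw [harmonic_eq_sum_Icc] at this
        push_cast at this
        refine this.trans ?_
        have hk : (1:ℝ) ≤ 1 / κ := by rw [le_div_iff₀ hκ]; linarith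
        have h1 : 1 ≤ ⌊1 / κ⌋₊ := Nat.le_floor (by simpa using hk)
        have : Real.log ⌊1 / κ⌋₊ ≤ Real.log (1 / κ) :=
          Real.log_le_log (by exact_mod_cast h1) (Nat.floor_le (by positivity))
        linarith

lemma inv_norm_one_sub_circ_le {t : ℝ} (h : ∀ k : ℤ, t ≠ k) :
    1 / ‖1 - circ t‖ ≤ 1 / Int.fract t + 1 / Int.fract (-t) := by
  have h0 : Int.fract t ≠ 0 := by
    intro h0
    apply h ⌊t⌋
    have := Int.self_sub_floor t
    linarith
  have hp : 0 < Int.fract t := lt_of_le_of_ne (Int.fract_nonneg t) (Ne.symm h0)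
  have hp1 : 0 < 1 - Int.fract t := by linarith [Int.fract_lt_one t]
  rw [Int.fract_neg h0]
  have h4 := four_mul_le_norm_one_sub_circ t
  rw [abs_sub_round_eq_min] at h4
  rcases le_total (Int.fract t) (1 - Int.fract t) with hle | hle
  · rw [min_eq_left hle] at h4
    have : 1 / ‖1 - circ t‖ ≤ 1 / Int.fract t :=
      one_div_le_one_div_of_le hp (by linarith)
    have : 0 < 1 / (1 - Int.fract t) := by positivity
    linarith
  · rw [min_eq_right hle] at h4
    have : 1 / ‖1 - circ t‖ ≤ 1 / (1 - Int.fract t) :=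
      one_div_le_one_div_of_le hp1 (by linarith)
    have : 0 < 1 / Int.fract t := by positivity
    linarith

lemma dio_circ_ne {ω a : ℝ} (ha : 1 < a) (h : Diophantine ω a) (m : ℕ) (hm : 1 ≤ m) (k : ℤ) :
    (m:ℝ) * ω ≠ k := by
  obtain ⟨c0, hc0, -, hd⟩ := dio_lower ha h
  intro heq
  have h1 := hd m hm k
  have h2 : (1:ℝ) ≤ m := by exact_mod_cast hm
  have h3 := Real.log_nonneg h2
  have h4 : 0 < (1 + Real.log m) ^ a := Real.rpow_pos_of_pos (by linarith) _
  rw [heq, sub_self, abs_zero] at h1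
  have : 0 < c0 / (m * (1 + Real.log m) ^ a) := by positivity
  linarith

/-- The basic small divisor estimate: for a strongly Diophantine frequency, `1/‖mω‖` is on average
only logarithmically larger than `M` for `1 ≤ m ≤ M`. -/
lemma sum_small_divisors {ω a : ℝ} (ha : 1 < a) (h : Diophantine ω a) :
    ∃ C > (0:ℝ), ∀ M : ℕ, 1 ≤ M →
      ∑ m ∈ Finset.Icc 1 M, 1 / ‖1 - circ (m * ω)‖ ≤ C * M * (1 + Real.log M) ^ (a + 1) := by
  obtain ⟨c0, hc0, hc1, hd⟩ := dio_lower ha h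
  have hlc : Real.log c0 ≤ 0 := Real.log_nonpos hc0.le hc1
  refine ⟨2 / c0 * (1 + a - Real.log c0), by apply mul_pos (by positivity); linarith, ?_⟩
  intro M hM
  have hM1 : (1:ℝ) ≤ M := by exact_mod_cast hM
  have hM0 : (0:ℝ) < M := by linarith
  have hlM := Real.log_nonneg hM1
  set ℓ := 1 + Real.log M with hℓ
  have hℓ1 : 1 ≤ ℓ := by linarith
  have hℓ0 : 0 < ℓ := by linarith
  have hℓa : 1 ≤ ℓ ^ a := Real.one_le_rpow hℓ1 (by linarith)
  set κ := c0 / (M * ℓ ^ a) with hκ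
  have hκ0 : 0 < κ := by positivity
  have hκ1 : κ ≤ 1 := by
    rw [hκ, div_le_one (by positivity)]
    nlinarith
  have hsep : ∀ m : ℕ, 1 ≤ m → m ≤ M → ∀ k : ℤ, κ ≤ |(m : ℝ) * ω - k| := by
    intro m hm hmM k
    refine le_trans ?_ (hd m hm k)
    have hm1 : (1:ℝ) ≤ m := by exact_mod_cast hm
    have hmM' : (m:ℝ) ≤ M := by exact_mod_cast hmM
    have := Real.log_nonneg hm1
    have hlog := Real.log_le_log (by linarith) hmM'
    have : 0 < (1 + Real.log m) ^ a := Real.rpow_pos_of_pos (by linarith) _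
    rw [hκ]
    gcongr
    linarith
  have hsep' : ∀ m : ℕ, 1 ≤ m → m ≤ M → ∀ k : ℤ, κ ≤ |(m : ℝ) * (-ω) - k| := by
    intro m hm hmM k
    have := hsep m hm hmM (-k)
    rw [show (m:ℝ) * (-ω) - k = -((m:ℝ) * ω - ((-k : ℤ) : ℝ)) by push_cast; ring, abs_neg]
    exact this
  have hlog : 1 + Real.log (1 / κ) ≤ (1 + a - Real.log c0) * ℓ := by
    have e1 : 1 / κ = M * ℓ ^ a / c0 := by rw [hκ, one_div_div]
    rw [e1, Real.log_div (by positivity) hc0.ne', Real.log_mul hM0.ne' (by positivity),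
      Real.log_rpow hℓ0]
    have : Real.log ℓ ≤ ℓ - 1 := Real.log_le_sub_one_of_pos hℓ0
    nlinarith
  have e1 : 1 / κ = M * ℓ ^ a / c0 := by rw [hκ, one_div_div]
  calc ∑ m ∈ Finset.Icc 1 M, 1 / ‖1 - circ (m * ω)‖
      ≤ ∑ m ∈ Finset.Icc 1 M, (1 / Int.fract ((m:ℝ) * ω) + 1 / Int.fract ((m:ℝ) * (-ω))) := by
        apply Finset.sum_le_sum
        intro m hm
        have := inv_norm_one_sub_circ_le (fun k => dio_circ_ne ha h m (Finset.mem_Icc.1 hm).1 k)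
        rwa [mul_neg]
    _ ≤ 1 / κ * (1 + Real.log (1 / κ)) + 1 / κ * (1 + Real.log (1 / κ)) := by
        rw [Finset.sum_add_distrib]
        exact add_le_add (sum_inv_fract_le hκ0 hκ1 hsep) (sum_inv_fract_le hκ0 hκ1 hsep')
    _ ≤ 2 * (1 / κ * ((1 + a - Real.log c0) * ℓ)) := by
        rw [← two_mul]
        gcongr
    _ = 2 / c0 * (1 + a - Real.log c0) * M * ℓ ^ (a + 1) := by
        rw [e1, Real.rpow_add hℓ0, Real.rpow_one]
        ring

/-- Summation by parts. -/
lemma sum_div_eq (f : ℕ → ℝ) (M : ℕ) :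
    ∑ m ∈ Finset.Icc 1 (M + 1), f m / m = (∑ m ∈ Finset.Icc 1 (M + 1), f m) / (M + 1 : ℕ) +
      ∑ j ∈ Finset.Icc 1 M, (∑ m ∈ Finset.Icc 1 j, f m) / (j * (j + 1)) := by
  induction M with
  | zero => simp
  | succ M ih =>
    have s1 : ∑ j ∈ Finset.Icc 1 (M + 1), (∑ m ∈ Finset.Icc 1 j, f m) / (j * (j + 1) : ℝ) =
        ∑ j ∈ Finset.Icc 1 M, (∑ m ∈ Finset.Icc 1 j, f m) / (j * (j + 1) : ℝ) +
          (∑ m ∈ Finset.Icc 1 (M + 1), f m) / (((M + 1 : ℕ) : ℝ) * (((M + 1 : ℕ) : ℝ) + 1)) :=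
      Finset.sum_Icc_succ_top (by omega) _
    have s2 : ∑ m ∈ Finset.Icc 1 (M + 1 + 1), f m =
        ∑ m ∈ Finset.Icc 1 (M + 1), f m + f (M + 1 + 1) := Finset.sum_Icc_succ_top (by omega) _
    rw [Finset.sum_Icc_succ_top (by omega), ih, s1, s2]
    generalize ∑ j ∈ Finset.Icc 1 M, (∑ m ∈ Finset.Icc 1 j, f m) / (j * (j + 1) : ℝ) = X
    generalize ∑ m ∈ Finset.Icc 1 (M + 1), f m = Y
    push_cast
    field_simp
    ring

lemma sum_small_divisors_weighted {ω a : ℝ} (ha : 1 < a) (h : Diophantine ω a) :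
    ∃ C > (0:ℝ), ∀ M : ℕ, 1 ≤ M →
      ∑ m ∈ Finset.Icc 1 M, (1 / ‖1 - circ (m * ω)‖) / m ≤ C * (1 + Real.log M) ^ (a + 2) := by
  obtain ⟨C, hC, hs⟩ := sum_small_divisors ha h
  refine ⟨2 * C, by positivity, ?_⟩
  intro M hM
  obtain ⟨M, rfl⟩ : ∃ N, M = N + 1 := ⟨M - 1, by omega⟩
  have hM1 : (1:ℝ) ≤ ((M + 1 : ℕ) : ℝ) := by exact_mod_cast hM
  have hM0 : (0:ℝ) < ((M + 1 : ℕ) : ℝ) := by linarith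
  have hlM := Real.log_nonneg hM1
  rw [sum_div_eq]
  set ℓ := 1 + Real.log ((M + 1 : ℕ) : ℝ) with hℓ
  have hℓ1 : 1 ≤ ℓ := by linarith
  have hℓ0 : 0 < ℓ := by linarith
  have hℓa : 0 < ℓ ^ (a + 1) := by positivity
  have t1 : (∑ m ∈ Finset.Icc 1 (M + 1), 1 / ‖1 - circ (m * ω)‖) / ((M + 1 : ℕ) : ℝ) ≤
      C * ℓ ^ (a + 1) := by
    rw [div_le_iff₀ hM0]
    linarith [hs (M + 1) hM]
  have t2 : ∑ j ∈ Finset.Icc 1 M, (∑ m ∈ Finset.Icc 1 j, 1 / ‖1 - circ (m * ω)‖) / (j * (j + 1))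
      ≤ ∑ j ∈ Finset.Icc 1 M, C * ℓ ^ (a + 1) * (j : ℝ)⁻¹ := by
    apply Finset.sum_le_sum
    intro j hj
    rw [Finset.mem_Icc] at hj
    have hj1 : (1:ℝ) ≤ j := by exact_mod_cast hj.1
    have hjM : (j:ℝ) ≤ ((M + 1 : ℕ) : ℝ) := by exact_mod_cast (by omega : j ≤ M + 1)
    have hlog := Real.log_le_log (by linarith) hjM
    have hlj := Real.log_nonneg hj1
    have hr : (1 + Real.log j) ^ (a + 1) ≤ ℓ ^ (a + 1) :=
      Real.rpow_le_rpow (by linarith) (by linarith) (by linarith)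
    have := hs j hj.1
    rw [div_le_iff₀ (by positivity)]
    calc _ ≤ _ := this
      _ ≤ C * j * ℓ ^ (a + 1) := by gcongr
      _ ≤ C * (j + 1) * ℓ ^ (a + 1) := by gcongr; linarith
      _ = _ := by field_simp
  have t3 : ∑ j ∈ Finset.Icc 1 M, (j : ℝ)⁻¹ ≤ ℓ := by
    have := harmonic_le_one_add_log (M + 1)
    rw [harmonic_eq_sum_Icc] at this
    push_cast at this
    refine le_trans ?_ (le_trans this ?_)
    · apply Finset.sum_le_sum_of_subset_of_nonneg
      · exact Finset.Icc_subset_Icc le_rfl (by omega)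
      · intros; positivity
    · simp [hℓ]
  rw [← Finset.mul_sum] at t2
  have e2 : ℓ ^ (a + 2) = ℓ ^ (a + 1) * ℓ := by
    rw [show a + 2 = (a + 1) + 1 by ring, Real.rpow_add hℓ0, Real.rpow_one]
  rw [e2]
  have : C * ℓ ^ (a + 1) * ∑ j ∈ Finset.Icc 1 M, (j : ℝ)⁻¹ ≤ C * ℓ ^ (a + 1) * ℓ := by gcongr
  have : C * ℓ ^ (a + 1) ≤ C * ℓ ^ (a + 1) * ℓ := by
    have : 0 < C * ℓ ^ (a + 1) := by positivity
    nlinarith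
  linarith

/-! ### Products of distances to an orbit segment -/

lemma norm_sum_orbit_pow_le (x ω : ℝ) (K m : ℕ) :
    ‖∑ k ∈ Finset.range K, circ (x + k * ω) ^ m‖ ≤ 2 * (1 / ‖1 - circ (m * ω)‖) ∨
      circ (m * ω) = 1 := by
  by_cases hq : circ (m * ω) = 1
  · exact Or.inr hq
  left
  have h1 : ∀ k ∈ Finset.range K, circ (x + k * ω) ^ m = circ (m * x) * circ (m * ω) ^ k := by
    intro k _
    rw [← circ_nat_mul, ← circ_nat_mul, ← circ_add]
    congr 1
    ring
  rw [Finset.sum_congr rfl h1, ← Finset.mul_sum, norm_mul, norm_circ, one_mul, geom_sum_eq hq,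
    norm_div, norm_sub_rev _ (1:ℂ), norm_sub_rev _ (1:ℂ), ← mul_div_assoc, mul_one]
  gcongr
  calc ‖1 - circ (m * ω) ^ K‖ ≤ ‖(1:ℂ)‖ + ‖circ (m * ω) ^ K‖ := norm_sub_le _ _
    _ = 2 := by rw [norm_pow, norm_circ]; norm_num

lemma circ_nat_mul_ne_one {ω a : ℝ} (ha : 1 < a) (h : Diophantine ω a) {m : ℕ} (hm : 1 ≤ m) :
    circ (m * ω) ≠ 1 := by
  intro he
  have h4 := four_mul_le_norm_one_sub_circ (m * ω)
  rw [he, sub_self, norm_zero] at h4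
  have h5 : |(m:ℝ) * ω - round ((m:ℝ) * ω)| = 0 := le_antisymm (by linarith) (abs_nonneg _)
  exact dio_circ_ne ha h m hm _ (sub_eq_zero.1 (abs_eq_zero.1 h5))

/-- The mean of `log |1 - z e^{2πix}|` over `x` is `0` for `|z| < 1`; if `|z|` stays below `1` by about
`1/K`, the sum over an orbit segment of length `K` is at most a power of `log K`. The proof expands
`log (1 - w)` in its Taylor series and sums the resulting exponential sums over the orbit. -/
lemma sum_log_norm_le {ω a : ℝ} (ha : 1 < a) (h : Diophantine ω a) :
    ∃ C > (0:ℝ), ∀ K : ℕ, 1 ≤ K → ∀ (x : ℝ) (z : ℂ), ‖z‖ ≤ K / (K + 1) →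
      |∑ k ∈ Finset.range K, Real.log ‖1 - z * circ (x + k * ω)‖| ≤
        C * (1 + Real.log K) ^ (a + 2) := by
  obtain ⟨C, hC, hs⟩ := sum_small_divisors_weighted ha h
  refine ⟨2 * C * 2 ^ (a + 2) + 2, by positivity, ?_⟩
  intro K hK x z hz
  have hK1 : (1:ℝ) ≤ K := by exact_mod_cast hK
  have hK0 : (0:ℝ) < K := by linarith
  have hlK := Real.log_nonneg hK1
  set r : ℝ := K / (K + 1) with hr
  have hr0 : 0 ≤ r := by positivity
  have hr1 : r < 1 := by rw [hr, div_lt_one (by positivity)]; linarith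
  have hzc : ∀ k : ℕ, ‖z * circ (x + k * ω)‖ < 1 := by
    intro k
    rw [norm_mul, norm_circ, mul_one]
    linarith
  have hsum : HasSum (fun m : ℕ => ∑ k ∈ Finset.range K, (z * circ (x + k * ω)) ^ m / (m : ℂ))
      (∑ k ∈ Finset.range K, -Complex.log (1 - z * circ (x + k * ω))) :=
    hasSum_sum fun k _ => Complex.hasSum_taylorSeries_neg_log (hzc k)
  set M := K ^ 2 with hM
  have hM1 : 1 ≤ M := Nat.one_le_pow _ _ hK
  set g1 : ℕ → ℝ := fun m => if m ∈ Finset.Icc 1 M then 2 * ((1 / ‖1 - circ (m * ω)‖) / m) else 0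
    with hg1
  have hS1 : HasSum g1 (∑ m ∈ Finset.Icc 1 M, g1 m) := by
    apply hasSum_sum_of_ne_finset_zero
    intro m hm
    simp only [hg1, if_neg hm]
  have hS2 : HasSum (fun m : ℕ => (1 / K : ℝ) * r ^ m) ((1 / K : ℝ) * (1 - r)⁻¹) :=
    (hasSum_geometric_of_lt_one hr0 hr1).mul_left _
  have hbound : ∀ m : ℕ, ‖∑ k ∈ Finset.range K, (z * circ (x + k * ω)) ^ m / (m : ℂ)‖ ≤
      g1 m + (1 / K : ℝ) * r ^ m := by
    intro m
    have h1 : ∑ k ∈ Finset.range K, (z * circ (x + k * ω)) ^ m / (m : ℂ) =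
        z ^ m / m * ∑ k ∈ Finset.range K, circ (x + k * ω) ^ m := by
      rw [Finset.mul_sum]
      refine Finset.sum_congr rfl fun k _ => ?_
      rw [mul_pow]
      ring
    rw [h1, norm_mul, norm_div, norm_pow, Complex.norm_natCast]
    rcases Nat.eq_zero_or_pos m with rfl | hm
    · simp [hg1]
    have hm0 : (0:ℝ) < m := by exact_mod_cast hm
    by_cases hmM : m ≤ M
    · have hmem : m ∈ Finset.Icc 1 M := Finset.mem_Icc.2 ⟨hm, hmM⟩
      simp only [hg1, if_pos hmem]
      have hne : circ (m * ω) ≠ 1 := circ_nat_mul_ne_one ha h hm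
      have h2 := (norm_sum_orbit_pow_le x ω K m).resolve_right hne
      have h3 : ‖z‖ ^ m ≤ 1 := pow_le_one₀ (norm_nonneg _) (by linarith)
      calc ‖z‖ ^ m / m * ‖∑ k ∈ Finset.range K, circ (x + k * ω) ^ m‖
          ≤ 1 / m * (2 * (1 / ‖1 - circ (m * ω)‖)) := by gcongr
        _ = 2 * ((1 / ‖1 - circ (m * ω)‖) / m) := by ring
        _ ≤ _ := le_add_of_nonneg_right (by positivity)
    · have hnm : m ∉ Finset.Icc 1 M := fun hh => hmM (Finset.mem_Icc.1 hh).2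
      simp only [hg1, if_neg hnm, zero_add]
      have hMm : ((K:ℝ)) ^ 2 ≤ m := by
        have : M ≤ m := by omega
        rw [hM] at this
        exact_mod_cast this
      have h2 : ‖∑ k ∈ Finset.range K, circ (x + k * ω) ^ m‖ ≤ K := by
        refine (norm_sum_le _ _).trans ?_
        simp [norm_pow, norm_circ]
      calc ‖z‖ ^ m / m * ‖∑ k ∈ Finset.range K, circ (x + k * ω) ^ m‖
          ≤ r ^ m / (K:ℝ) ^ 2 * K := by gcongr
        _ = _ := by field_simp
  have hfin := (hsum.norm_le_of_bounded (hS1.add hS2) hbound)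
  have hre : ∑ k ∈ Finset.range K, Real.log ‖1 - z * circ (x + k * ω)‖ =
      -(∑ k ∈ Finset.range K, -Complex.log (1 - z * circ (x + k * ω))).re := by
    rw [Finset.sum_neg_distrib, Complex.neg_re, neg_neg, Complex.re_sum]
    exact Finset.sum_congr rfl fun k _ => (Complex.log_re _).symm
  rw [hre, abs_neg]
  refine (Complex.abs_re_le_norm _).trans (hfin.trans ?_)
  have e1 : ∑ m ∈ Finset.Icc 1 M, g1 m ≤ 2 * (C * (1 + Real.log M) ^ (a + 2)) := by
    refine le_trans (le_of_eq ?_) (mul_le_mul_of_nonneg_left (hs M hM1) zero_le_two)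
    rw [Finset.mul_sum]
    exact Finset.sum_congr rfl fun m hm => by simp only [hg1, if_pos hm]
  have e2 : (1 + Real.log M) ^ (a + 2) ≤ 2 ^ (a + 2) * (1 + Real.log K) ^ (a + 2) := by
    rw [← Real.mul_rpow (by norm_num) (by linarith)]
    have : Real.log M = 2 * Real.log K := by
      rw [hM, Nat.cast_pow, Real.log_pow]
      norm_num
    exact Real.rpow_le_rpow (by linarith) (by linarith) (by linarith)
  have e3 : (1 / K : ℝ) * (1 - r)⁻¹ ≤ 2 := by
    have : 1 - r = 1 / (K + 1) := by rw [hr]; field_simp; ring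
    rw [this, one_div, one_div, inv_inv, inv_mul_le_iff₀ hK0]
    linarith
  have e4 : 1 ≤ (1 + Real.log K) ^ (a + 2) := Real.one_le_rpow (by linarith) (by linarith)
  nlinarith [mul_le_mul_of_nonneg_left e2 hC.le]

lemma norm_circ_sub_circ (s t : ℝ) : ‖circ s - circ t‖ = ‖1 - circ (s - t)‖ := by
  have h : circ s = circ t * circ (s - t) := by rw [← circ_add]; congr 1; ring
  rw [h, show circ t * circ (s - t) - circ t = -(circ t * (1 - circ (s - t))) by ring, norm_neg,
    norm_mul, norm_circ, one_mul]

lemma circ_sub_pos {ω a : ℝ} (ha : 1 < a) (h : Diophantine ω a) (x : ℝ) {k k' : ℕ} (hk : k ≠ k') :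
    0 < ‖circ (x + k * ω) - circ (x + k' * ω)‖ := by
  wlog hlt : k' < k generalizing k k'
  · rw [norm_sub_rev]
    exact this hk.symm (by omega)
  rw [norm_circ_sub_circ, show x + k * ω - (x + k' * ω) = ((k - k' : ℕ) : ℝ) * ω by
    rw [Nat.cast_sub hlt.le]; ring]
  exact norm_pos_iff.2 (sub_ne_zero.2 (circ_nat_mul_ne_one ha h (by omega)).symm)

lemma sum_inv_dist_le {ω : ℝ} (x : ℝ) (K k₀ : ℕ) (hk : k₀ < K) :
    ∑ k ∈ (Finset.range K).erase k₀, 1 / ‖circ (x + k * ω) - circ (x + k₀ * ω)‖ ≤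
      2 * ∑ m ∈ Finset.Icc 1 K, 1 / ‖1 - circ (m * ω)‖ := by
  have hsplit : (Finset.range K).erase k₀ = Finset.range k₀ ∪ Finset.Ico (k₀ + 1) K := by
    ext k
    simp only [Finset.mem_erase, Finset.mem_range, Finset.mem_union, Finset.mem_Ico]
    omega
  rw [hsplit]
  rw [Finset.sum_union (Finset.disjoint_left.2 fun k h1 h2 => by
    simp only [Finset.mem_range, Finset.mem_Ico] at h1 h2; omega), two_mul]
  refine add_le_add ?_ ?_
  · have h1 : ∀ k ∈ Finset.range k₀, 1 / ‖circ (x + k * ω) - circ (x + k₀ * ω)‖ =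
        1 / ‖1 - circ ((k₀ - k : ℕ) * ω)‖ := by
      intro k hk'
      have := (Finset.mem_range.1 hk').le
      rw [norm_sub_rev, norm_circ_sub_circ, Nat.cast_sub this]
      congr 4
      ring
    rw [Finset.sum_congr rfl h1]
    have hinj : Set.InjOn (fun k => k₀ - k) (Finset.range k₀ : Finset ℕ) := by
      intro k h1 k' h2 heq
      simp only [Finset.coe_range, Set.mem_Iio] at h1 h2 heq
      omega
    rw [← Finset.sum_image (f := fun m : ℕ => 1 / ‖1 - circ (m * ω)‖) hinj]
    apply Finset.sum_le_sum_of_subset_of_nonneg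
    · intro j hj
      obtain ⟨k, hk', rfl⟩ := Finset.mem_image.1 hj
      simp only [Finset.mem_range, Finset.mem_Icc] at hk' ⊢
      omega
    · intros
      positivity
  · have h1 : ∀ k ∈ Finset.Ico (k₀ + 1) K, 1 / ‖circ (x + k * ω) - circ (x + k₀ * ω)‖ =
        1 / ‖1 - circ ((k - k₀ : ℕ) * ω)‖ := by
      intro k hk'
      have : k₀ ≤ k := by have := (Finset.mem_Ico.1 hk').1; omega
      rw [norm_circ_sub_circ, Nat.cast_sub this]
      congr 4
      ring
    rw [Finset.sum_congr rfl h1]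
    have hinj : Set.InjOn (fun k => k - k₀) (Finset.Ico (k₀ + 1) K : Finset ℕ) := by
      intro k h1 k' h2 heq
      simp only [Finset.coe_Ico, Set.mem_Ico] at h1 h2 heq
      omega
    rw [← Finset.sum_image (f := fun m : ℕ => 1 / ‖1 - circ (m * ω)‖) hinj]
    apply Finset.sum_le_sum_of_subset_of_nonneg
    · intro j hj
      obtain ⟨k, hk', rfl⟩ := Finset.mem_image.1 hj
      simp only [Finset.mem_Ico, Finset.mem_Icc] at hk' ⊢
      omega
    · intros
      positivity

lemma norm_sub_le_norm_sub_smul {e ζ : ℂ} (he : ‖e‖ = 1) (hζ : 1 ≤ ‖ζ‖) {t : ℝ} (ht : 1 ≤ t) :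
    ‖e - ζ‖ ≤ ‖e - t * ζ‖ := by
  refine le_of_sq_le_sq ?_ (norm_nonneg _)
  have h1 : e.re ^ 2 + e.im ^ 2 = 1 := by
    have := Complex.sq_norm e
    rw [he, Complex.normSq_apply] at this
    linarith
  have h2 : 1 ≤ ζ.re ^ 2 + ζ.im ^ 2 := by
    have := Complex.sq_norm ζ
    rw [Complex.normSq_apply] at this
    nlinarith
  rw [Complex.sq_norm, Complex.sq_norm, Complex.normSq_apply, Complex.normSq_apply]
  simp only [Complex.sub_re, Complex.sub_im, Complex.mul_re, Complex.mul_im, Complex.ofReal_re,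
    Complex.ofReal_im, zero_mul, sub_zero, add_zero]
  have h3 : 2 * (e.re * ζ.re + e.im * ζ.im) ≤ (t + 1) * (ζ.re ^ 2 + ζ.im ^ 2) := by
    nlinarith [sq_nonneg (e.re - ζ.re), sq_nonneg (e.im - ζ.im)]
  nlinarith [mul_le_mul_of_nonneg_left h3 (sub_nonneg.2 ht)]

lemma norm_sub_inv_conj {e ζ : ℂ} (he : ‖e‖ = 1) (hζ : ζ ≠ 0) :
    ‖e - ζ‖ = ‖ζ‖ * ‖e - (starRingEnd ℂ ζ)⁻¹‖ := by
  have hc : starRingEnd ℂ ζ ≠ 0 := by simpa using hζ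
  have hee : e * starRingEnd ℂ e = 1 := by
    rw [Complex.mul_conj, Complex.normSq_eq_norm_sq, he]
    norm_num
  have hn : ‖ζ‖ = ‖starRingEnd ℂ ζ‖ := (Complex.norm_conj ζ).symm
  rw [hn, ← norm_mul, mul_sub, mul_inv_cancel₀ hc]
  have : starRingEnd ℂ ζ * e - 1 = -(e * starRingEnd ℂ (e - ζ)) := by
    rw [map_sub, mul_sub, hee]
    ring
  rw [this, norm_neg, norm_mul, he, one_mul, Complex.norm_conj]

/-- The bounds of `prod_dist_bounds` for `ζ` outside the open unit disc. If `|ζ| < 1 + 1/K`,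
compare with the radial projection `ζ'` of `ζ` to the circle of radius `1 + 1/K`: the factor
belonging to the orbit point nearest to `ζ` is controlled by `κ`, the others by the sum of
inverse distances between orbit points. -/
lemma prod_dist_bounds_outside {ω a : ℝ} (ha : 1 < a) (h : Diophantine ω a) :
    ∃ C > (0:ℝ), ∀ K : ℕ, 1 ≤ K → ∀ (x : ℝ) (ζ : ℂ), 1 ≤ ‖ζ‖ →
      (∏ k ∈ Finset.range K, ‖circ (x + k * ω) - ζ‖ ≤
        ‖ζ‖ ^ K * Real.exp (C * (1 + Real.log K) ^ (a + 2))) ∧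
      (∀ κ : ℝ, 0 < κ → κ ≤ 1 → (∀ k < K, κ ≤ ‖circ (x + k * ω) - ζ‖) →
        ‖ζ‖ ^ K * Real.exp (-(C * (1 + Real.log K) ^ (a + 2))) * κ ≤
          ∏ k ∈ Finset.range K, ‖circ (x + k * ω) - ζ‖) := by
  obtain ⟨C1, hC1, hs⟩ := sum_log_norm_le ha h
  obtain ⟨C2, hC2, hd⟩ := sum_small_divisors ha h
  refine ⟨C1 + 4 * C2 + 1, by positivity, ?_⟩
  intro K hK x ζ hζ
  have hK1 : (1:ℝ) ≤ K := by exact_mod_cast hK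
  have hK0 : (0:ℝ) < K := by linarith
  have hlK := Real.log_nonneg hK1
  set B := (1 + Real.log K) ^ (a + 2) with hB
  have hB1 : 1 ≤ B := Real.one_le_rpow (by linarith) (by linarith)
  -- the estimate far from the circle
  have far : ∀ ξ : ℂ, (1 + 1 / K : ℝ) ≤ ‖ξ‖ →
      (∏ k ∈ Finset.range K, ‖circ (x + k * ω) - ξ‖ ≤ ‖ξ‖ ^ K * Real.exp (C1 * B)) ∧
      ‖ξ‖ ^ K * Real.exp (-(C1 * B)) ≤ ∏ k ∈ Finset.range K, ‖circ (x + k * ω) - ξ‖ := by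
    intro ξ hξ
    have hpos : 0 < 1 + 1 / (K:ℝ) := by positivity
    have hξ0 : ξ ≠ 0 := norm_pos_iff.1 (by linarith)
    have hz : ‖ξ⁻¹‖ ≤ K / (K + 1) := by
      rw [norm_inv]
      calc ‖ξ‖⁻¹ ≤ (1 + 1 / K : ℝ)⁻¹ := by gcongr
        _ = K / (K + 1) := by field_simp
    have hlt : (K:ℝ) / (K + 1) < 1 := by rw [div_lt_one (by positivity)]; linarith
    have hA := hs K hK x ξ⁻¹ hz
    have hpk : ∀ k ∈ Finset.range K, ‖1 - ξ⁻¹ * circ (x + k * ω)‖ ≠ 0 := by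
      intro k _ h0
      rw [norm_eq_zero, sub_eq_zero] at h0
      have : ‖ξ⁻¹ * circ (x + k * ω)‖ = 1 := by rw [← h0, norm_one]
      rw [norm_mul, norm_circ, mul_one] at this
      linarith
    rw [← Real.log_prod hpk] at hA
    have hprod : ∏ k ∈ Finset.range K, ‖circ (x + k * ω) - ξ‖ =
        ‖ξ‖ ^ K * ∏ k ∈ Finset.range K, ‖1 - ξ⁻¹ * circ (x + k * ω)‖ := by
      have : ∀ k ∈ Finset.range K, ‖circ (x + k * ω) - ξ‖ =
          ‖ξ‖ * ‖1 - ξ⁻¹ * circ (x + k * ω)‖ := by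
        intro k _
        rw [norm_sub_rev, ← norm_mul, mul_sub, mul_one, mul_inv_cancel_left₀ hξ0]
      rw [Finset.prod_congr rfl this, Finset.prod_mul_distrib, Finset.prod_const,
        Finset.card_range]
    have hp0 : 0 < ∏ k ∈ Finset.range K, ‖1 - ξ⁻¹ * circ (x + k * ω)‖ :=
      Finset.prod_pos fun k hk => lt_of_le_of_ne (norm_nonneg _) (hpk k hk).symm
    rw [abs_le] at hA
    rw [hprod]
    constructor
    · gcongr
      rw [← Real.log_le_iff_le_exp hp0]
      exact hA.2
    · gcongr
      rw [← Real.le_log_iff_exp_le hp0]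
      exact hA.1
  rcases le_or_gt (1 + 1 / K : ℝ) ‖ζ‖ with hfar | hnear
  · obtain ⟨hu, hl⟩ := far ζ hfar
    constructor
    · refine hu.trans ?_
      gcongr
      linarith
    · intro κ hκ hκ1 _
      refine le_trans ?_ hl
      calc _ ≤ ‖ζ‖ ^ K * Real.exp (-((C1 + 4 * C2 + 1) * B)) * 1 := by gcongr
        _ ≤ _ := by
          rw [mul_one]
          gcongr
          linarith
  · have hζ0 : ‖ζ‖ ≠ 0 := by linarith
    set t : ℝ := (1 + 1 / K) / ‖ζ‖ with ht
    have ht1 : 1 ≤ t := by rw [ht, le_div_iff₀ (by linarith)]; linarith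
    have htn : ‖(t:ℂ) * ζ‖ = 1 + 1 / K := by
      rw [norm_mul, Complex.norm_real, Real.norm_of_nonneg (by linarith), ht,
        div_mul_cancel₀ _ hζ0]
    have hdist : ‖ζ - t * ζ‖ ≤ 1 / K := by
      rw [show ζ - t * ζ = ((1 - t : ℝ) : ℂ) * ζ by push_cast; ring, norm_mul, Complex.norm_real,
        Real.norm_eq_abs, abs_sub_comm, abs_of_nonneg (by linarith), sub_mul, one_mul, ht,
        div_mul_cancel₀ _ hζ0]
      linarith
    obtain ⟨hu, hl⟩ := far (t * ζ) htn.ge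
    rw [htn] at hu hl
    have hsK : (1 + 1 / K : ℝ) ^ K ≤ Real.exp 1 := by
      calc (1 + 1 / K : ℝ) ^ K ≤ (Real.exp (1 / K)) ^ K := by
            gcongr
            have := Real.add_one_le_exp (1 / K : ℝ)
            linarith
        _ = Real.exp 1 := by rw [← Real.exp_nat_mul]; congr 1; field_simp
    constructor
    · calc ∏ k ∈ Finset.range K, ‖circ (x + k * ω) - ζ‖
          ≤ ∏ k ∈ Finset.range K, ‖circ (x + k * ω) - t * ζ‖ := by
            apply Finset.prod_le_prod
            · intros; positivity
            · intro k _
              exact norm_sub_le_norm_sub_smul (norm_circ _) hζ ht1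
        _ ≤ _ := hu
        _ ≤ Real.exp 1 * Real.exp (C1 * B) := by gcongr
        _ = 1 * Real.exp (1 + C1 * B) := by rw [Real.exp_add, one_mul]
        _ ≤ _ := by
            gcongr
            · exact one_le_pow₀ hζ
            · nlinarith
    · intro κ hκ hκ1 hsep
      obtain ⟨k₀, hk₀, hmin⟩ := Finset.exists_min_image (Finset.range K)
        (fun k : ℕ => ‖circ (x + k * ω) - ζ‖) ⟨0, Finset.mem_range.2 (by omega)⟩
      have hpos : ∀ k ∈ Finset.range K, 0 < ‖circ (x + k * ω) - ζ‖ := fun k hk =>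
        hκ.trans_le (hsep k (Finset.mem_range.1 hk))
      have hratio : ∀ k ∈ Finset.range K, ‖circ (x + k * ω) - t * ζ‖ ≤
          ‖circ (x + k * ω) - ζ‖ * (1 + 1 / K * (1 / ‖circ (x + k * ω) - ζ‖)) := by
        intro k hk
        have := (hpos k hk).ne'
        have e1 : ‖circ (x + k * ω) - ζ‖ * (1 + 1 / K * (1 / ‖circ (x + k * ω) - ζ‖)) =
            ‖circ (x + k * ω) - ζ‖ + 1 / K := by field_simp
        rw [e1]
        calc _ = ‖(circ (x + k * ω) - ζ) + (ζ - t * ζ)‖ := by congr 1; ring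
          _ ≤ _ := (norm_add_le _ _).trans (by gcongr)
      have hothers : ∏ k ∈ (Finset.range K).erase k₀,
          (1 + 1 / K * (1 / ‖circ (x + k * ω) - ζ‖)) ≤ Real.exp (4 * C2 * B) := by
        calc _ ≤ ∏ k ∈ (Finset.range K).erase k₀,
              Real.exp (1 / K * (1 / ‖circ (x + k * ω) - ζ‖)) := by
              apply Finset.prod_le_prod
              · intros; positivity
              · intro k _
                have := Real.add_one_le_exp (1 / K * (1 / ‖circ (x + k * ω) - ζ‖))
                linarith
          _ = Real.exp (1 / K * ∑ k ∈ (Finset.range K).erase k₀,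
                1 / ‖circ (x + k * ω) - ζ‖) := by
              rw [← Real.exp_sum, Finset.mul_sum]
          _ ≤ _ := by
              rw [Real.exp_le_exp]
              have s1 : ∑ k ∈ (Finset.range K).erase k₀, 1 / ‖circ (x + k * ω) - ζ‖ ≤
                  ∑ k ∈ (Finset.range K).erase k₀,
                    2 * (1 / ‖circ (x + k * ω) - circ (x + k₀ * ω)‖) := by
                apply Finset.sum_le_sum
                intro k hk
                rw [Finset.mem_erase] at hk
                have hk' := hpos k hk.2
                have hm := hmin k hk.2
                have tri : ‖circ (x + k * ω) - circ (x + k₀ * ω)‖ ≤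
                    2 * ‖circ (x + k * ω) - ζ‖ := by
                  calc _ = ‖(circ (x + k * ω) - ζ) - (circ (x + k₀ * ω) - ζ)‖ := by
                        congr 1; ring
                    _ ≤ _ := (norm_sub_le _ _).trans (by linarith)
                have hne : 0 < ‖circ (x + k * ω) - circ (x + k₀ * ω)‖ := by
                  have := circ_sub_pos ha h x hk.1
                  exact this
                rw [← mul_div_assoc, mul_one, div_le_div_iff₀ hk' hne]
                linarith
              have s2 := sum_inv_dist_le (ω := ω) x K k₀ (Finset.mem_range.1 hk₀)
              have s3 := hd K hK
              rw [← Finset.mul_sum] at s1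
              have s4 : ∑ k ∈ (Finset.range K).erase k₀, 1 / ‖circ (x + k * ω) - ζ‖ ≤
                  4 * (C2 * K * (1 + Real.log K) ^ (a + 1)) := by linarith
              have s5 : (1 + Real.log K) ^ (a + 1) ≤ B :=
                Real.rpow_le_rpow_of_exponent_le (by linarith) (by linarith)
              calc _ ≤ 1 / K * (4 * (C2 * K * (1 + Real.log K) ^ (a + 1))) := by gcongr
                _ = 4 * C2 * (1 + Real.log K) ^ (a + 1) := by field_simp
                _ ≤ _ := by gcongr
      have hfirst : 1 + 1 / K * (1 / ‖circ (x + k₀ * ω) - ζ‖) ≤ 2 / κ := by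
        have h1 : 1 / ‖circ (x + k₀ * ω) - ζ‖ ≤ 1 / κ :=
          one_div_le_one_div_of_le hκ (hsep k₀ (Finset.mem_range.1 hk₀))
        have h2 : 1 / (K:ℝ) ≤ 1 := by rw [div_le_one hK0]; exact hK1
        have h3 : 1 ≤ 1 / κ := by rw [le_div_iff₀ hκ]; linarith
        calc _ ≤ 1 + 1 * (1 / κ) := by gcongr
          _ ≤ 2 / κ := by rw [show 2 / κ = 1 / κ + 1 / κ by ring]; linarith
      have hup : ∏ k ∈ Finset.range K, ‖circ (x + k * ω) - t * ζ‖ ≤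
          (∏ k ∈ Finset.range K, ‖circ (x + k * ω) - ζ‖) *
            (2 / κ * Real.exp (4 * C2 * B)) := by
        calc _ ≤ ∏ k ∈ Finset.range K, (‖circ (x + k * ω) - ζ‖ *
              (1 + 1 / K * (1 / ‖circ (x + k * ω) - ζ‖))) :=
              Finset.prod_le_prod (fun _ _ => norm_nonneg _) hratio
          _ = (∏ k ∈ Finset.range K, ‖circ (x + k * ω) - ζ‖) *
              ((1 + 1 / K * (1 / ‖circ (x + k₀ * ω) - ζ‖)) * ∏ k ∈ (Finset.range K).erase k₀,
                (1 + 1 / K * (1 / ‖circ (x + k * ω) - ζ‖))) := by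
              rw [Finset.prod_mul_distrib,
                Finset.mul_prod_erase (Finset.range K)
                  (fun k : ℕ => 1 + 1 / K * (1 / ‖circ (x + k * ω) - ζ‖)) hk₀]
          _ ≤ _ := by
              gcongr
      have hlow := hl.trans hup
      have hζK : ‖ζ‖ ^ K ≤ (1 + 1 / K : ℝ) ^ K := by gcongr
      have htwo : (2:ℝ) ≤ Real.exp 1 := by linarith [Real.add_one_le_exp (1:ℝ)]
      set P := ∏ k ∈ Finset.range K, ‖circ (x + k * ω) - ζ‖ with hP
      have hP0 : 0 ≤ P := Finset.prod_nonneg fun _ _ => norm_nonneg _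
      have h1 : ‖ζ‖ ^ K * Real.exp (-(C1 * B)) * κ ≤ P * (Real.exp 1 * Real.exp (4 * C2 * B)) := by
        calc ‖ζ‖ ^ K * Real.exp (-(C1 * B)) * κ
            ≤ (1 + 1 / K : ℝ) ^ K * Real.exp (-(C1 * B)) * κ := by gcongr
          _ ≤ P * (2 / κ * Real.exp (4 * C2 * B)) * κ := by gcongr
          _ = P * (2 * Real.exp (4 * C2 * B)) := by field_simp
          _ ≤ _ := by gcongr
      rw [← Real.exp_add] at h1
      calc ‖ζ‖ ^ K * Real.exp (-((C1 + 4 * C2 + 1) * B)) * κ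
          ≤ ‖ζ‖ ^ K * Real.exp (-(C1 * B) - (1 + 4 * C2 * B)) * κ := by
            gcongr
            nlinarith
        _ = (‖ζ‖ ^ K * Real.exp (-(C1 * B)) * κ) * Real.exp (-(1 + 4 * C2 * B)) := by
            rw [sub_eq_add_neg, Real.exp_add]
            ring
        _ ≤ (P * Real.exp (1 + 4 * C2 * B)) * Real.exp (-(1 + 4 * C2 * B)) := by gcongr
        _ = P := by rw [mul_assoc, ← Real.exp_add, add_neg_cancel, Real.exp_zero, mul_one]

/-- Two-sided control of the product of distances from `ζ` to an orbit segment of length `K`,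
uniformly in `ζ ∈ ℂ`. Points inside the unit disc are reflected to the outside. -/
lemma prod_dist_bounds {ω a : ℝ} (ha : 1 < a) (h : Diophantine ω a) :
    ∃ C > (0:ℝ), ∀ K : ℕ, 1 ≤ K → ∀ (x : ℝ) (ζ : ℂ),
      (∏ k ∈ Finset.range K, ‖circ (x + k * ω) - ζ‖ ≤
        (max 1 ‖ζ‖) ^ K * Real.exp (C * (1 + Real.log K) ^ (a + 2))) ∧
      (∀ κ : ℝ, 0 < κ → κ ≤ 1 → (∀ k < K, κ ≤ ‖circ (x + k * ω) - ζ‖) →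
        (max 1 ‖ζ‖) ^ K * Real.exp (-(C * (1 + Real.log K) ^ (a + 2))) * κ ≤
          ∏ k ∈ Finset.range K, ‖circ (x + k * ω) - ζ‖) := by
  obtain ⟨C, hC, hout⟩ := prod_dist_bounds_outside ha h
  refine ⟨C, hC, ?_⟩
  intro K hK x ζ
  rcases le_total 1 ‖ζ‖ with hζ | hζ
  · rw [max_eq_right hζ]
    exact hout K hK x ζ hζ
  rw [max_eq_left hζ, one_pow, one_mul]
  have hK1 : (1:ℝ) ≤ K := by exact_mod_cast hK
  have hlK := Real.log_nonneg hK1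
  have hB0 : 0 ≤ C * (1 + Real.log K) ^ (a + 2) := by positivity
  by_cases h0 : ζ = 0
  · subst h0
    simp only [sub_zero, norm_circ, Finset.prod_const_one, one_mul]
    refine ⟨Real.one_le_exp hB0, fun κ hκ hκ1 _ => ?_⟩
    have : Real.exp (-(C * (1 + Real.log K) ^ (a + 2))) ≤ 1 := Real.exp_le_one_iff.2 (by linarith)
    exact mul_le_one₀ this hκ.le hκ1
  have hn0 : 0 < ‖ζ‖ := norm_pos_iff.2 h0
  set ξ := (starRingEnd ℂ ζ)⁻¹ with hξ
  have hξn : ‖ξ‖ = ‖ζ‖⁻¹ := by rw [hξ, norm_inv, Complex.norm_conj]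
  have hξ1 : 1 ≤ ‖ξ‖ := by rw [hξn]; exact (one_le_inv₀ hn0).2 hζ
  obtain ⟨hu, hl⟩ := hout K hK x ξ hξ1
  have hfac : ∀ k : ℕ, ‖circ (x + k * ω) - ζ‖ = ‖ζ‖ * ‖circ (x + k * ω) - ξ‖ := fun k =>
    norm_sub_inv_conj (norm_circ _) h0
  have hprod : ∏ k ∈ Finset.range K, ‖circ (x + k * ω) - ζ‖ =
      ‖ζ‖ ^ K * ∏ k ∈ Finset.range K, ‖circ (x + k * ω) - ξ‖ := by
    simp_rw [hfac]
    rw [Finset.prod_mul_distrib, Finset.prod_const, Finset.card_range]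
  have hcancel : ‖ζ‖ ^ K * ‖ξ‖ ^ K = 1 := by
    rw [← mul_pow, hξn, mul_inv_cancel₀ hn0.ne', one_pow]
  rw [hprod]
  constructor
  · calc _ ≤ ‖ζ‖ ^ K * (‖ξ‖ ^ K * Real.exp (C * (1 + Real.log K) ^ (a + 2))) := by gcongr
      _ = _ := by rw [← mul_assoc, hcancel, one_mul]
  · intro κ hκ hκ1 hsep
    have := hl κ hκ hκ1 (fun k hk => by
      have h1 := hsep k hk
      rw [hfac k] at h1
      nlinarith [norm_nonneg (circ (x + k * ω) - ξ)])
    calc _ = ‖ζ‖ ^ K * (‖ξ‖ ^ K * Real.exp (-(C * (1 + Real.log K) ^ (a + 2))) * κ) := by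
          rw [← mul_assoc, ← mul_assoc, hcancel, one_mul]
      _ ≤ _ := by gcongr

/-! ### Polynomials along an orbit segment -/

lemma multiset_prod_dist_upper {ω x E : ℝ} {K : ℕ}
    (h : ∀ ζ : ℂ, ∏ k ∈ Finset.range K, ‖circ (x + k * ω) - ζ‖ ≤ (max 1 ‖ζ‖) ^ K * Real.exp E)
    (s : Multiset ℂ) :
    ∏ k ∈ Finset.range K, (s.map fun w => ‖circ (x + k * ω) - w‖).prod ≤
      (s.map fun w => max 1 ‖w‖).prod ^ K * Real.exp (s.card * E) := by
  induction s using Multiset.induction_on with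
  | empty => simp
  | cons w s ih =>
    simp only [Multiset.map_cons, Multiset.prod_cons, Multiset.card_cons, Finset.prod_mul_distrib]
    have h0 : 0 ≤ ∏ k ∈ Finset.range K, (s.map fun w => ‖circ (x + k * ω) - w‖).prod := by
      refine Finset.prod_nonneg fun k _ => Multiset.prod_nonneg fun a ha => ?_
      obtain ⟨w, -, rfl⟩ := Multiset.mem_map.1 ha
      positivity
    calc _ ≤ ((max 1 ‖w‖) ^ K * Real.exp E) *
          ((s.map fun w => max 1 ‖w‖).prod ^ K * Real.exp (s.card * E)) := by
          gcongr
          exact h w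
      _ = _ := by
          rw [mul_pow]
          push_cast
          rw [add_mul, one_mul, Real.exp_add]
          ring

lemma multiset_prod_dist_lower {ω x E κ : ℝ} {K : ℕ} (hκ : 0 < κ) (s : Multiset ℂ)
    (h : ∀ ζ ∈ s, (max 1 ‖ζ‖) ^ K * Real.exp (-E) * κ ≤
      ∏ k ∈ Finset.range K, ‖circ (x + k * ω) - ζ‖) :
    (s.map fun w => max 1 ‖w‖).prod ^ K * Real.exp (-(s.card * E)) * κ ^ s.card ≤
      ∏ k ∈ Finset.range K, (s.map fun w => ‖circ (x + k * ω) - w‖).prod := by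
  induction s using Multiset.induction_on with
  | empty => simp
  | cons w s ih =>
    simp only [Multiset.map_cons, Multiset.prod_cons, Multiset.card_cons, Finset.prod_mul_distrib]
    have ih' := ih fun ζ hζ => h ζ (Multiset.mem_cons_of_mem hζ)
    have hw := h w (Multiset.mem_cons_self w s)
    have h0 : 0 ≤ (s.map fun w => max 1 ‖w‖).prod := by
      refine Multiset.prod_nonneg fun a ha => ?_
      obtain ⟨w, -, rfl⟩ := Multiset.mem_map.1 ha
      positivity
    calc _ = ((max 1 ‖w‖) ^ K * Real.exp (-E) * κ) *
          ((s.map fun w => max 1 ‖w‖).prod ^ K * Real.exp (-(s.card * E)) * κ ^ s.card) := by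
          rw [mul_pow]
          push_cast
          rw [add_mul, one_mul, neg_add, Real.exp_add, pow_succ]
          ring
      _ ≤ _ := by gcongr

lemma norm_eval_eq (f : Polynomial ℂ) (z : ℂ) :
    ‖f.eval z‖ = ‖f.leadingCoeff‖ * (f.roots.map fun w => ‖z - w‖).prod := by
  rw [(IsAlgClosed.splits f).eval_eq_prod_roots, norm_mul]
  congr 1
  generalize f.roots = s
  induction s using Multiset.induction_on with
  | empty => simp
  | cons w s ih => simp [ih]

/-- Along every orbit segment of length `K`, the product of the values of a polynomial `f` of degree
at most `D` is at most `μ ^ K` up to a factor `exp (O(D (1 + log K)^{a+2}))`, and at least that with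
a further loss of `κ ^ D` if the segment stays `κ`-away from the roots of `f`. The witness for `μ` is
the Mahler measure of `f`. -/
lemma poly_bounds {ω a : ℝ} (ha : 1 < a) (h : Diophantine ω a) :
    ∃ C > (0:ℝ), ∀ K : ℕ, 1 ≤ K → ∀ (f : Polynomial ℂ), f ≠ 0 → ∀ D : ℕ, f.natDegree ≤ D →
      ∃ μ > (0:ℝ),
      (∀ x : ℝ, ∏ k ∈ Finset.range K, ‖f.eval (circ (x + k * ω))‖ ≤
        μ ^ K * Real.exp (D * (C * (1 + Real.log K) ^ (a + 2)))) ∧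
      (∀ x κ : ℝ, 0 < κ → κ ≤ 1 → (∀ k < K, ∀ w ∈ f.roots, κ ≤ ‖circ (x + k * ω) - w‖) →
        μ ^ K * Real.exp (-(D * (C * (1 + Real.log K) ^ (a + 2)))) * κ ^ D ≤
          ∏ k ∈ Finset.range K, ‖f.eval (circ (x + k * ω))‖) := by
  obtain ⟨C, hC, hb⟩ := prod_dist_bounds ha h
  refine ⟨C, hC, ?_⟩
  intro K hK f hf D hD
  have hK1 : (1:ℝ) ≤ K := by exact_mod_cast hK
  have hlK := Real.log_nonneg hK1
  set E := C * (1 + Real.log K) ^ (a + 2) with hE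
  have hE0 : 0 ≤ E := by positivity
  have hcard : f.roots.card ≤ D := f.card_roots'.trans hD
  have hcard' : (f.roots.card : ℝ) ≤ D := by exact_mod_cast hcard
  have hP : 0 < (f.roots.map fun w => max 1 ‖w‖).prod := by
    refine Multiset.prod_pos fun a ha => ?_
    obtain ⟨w, -, rfl⟩ := Multiset.mem_map.1 ha
    positivity
  have hlc : 0 < ‖f.leadingCoeff‖ := norm_pos_iff.2 (Polynomial.leadingCoeff_ne_zero.2 hf)
  refine ⟨‖f.leadingCoeff‖ * (f.roots.map fun w => max 1 ‖w‖).prod, by positivity, ?_, ?_⟩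
  · intro x
    have h1 := multiset_prod_dist_upper (fun ζ => (hb K hK x ζ).1) f.roots
    simp_rw [norm_eval_eq]
    rw [Finset.prod_mul_distrib, Finset.prod_const, Finset.card_range, mul_pow, mul_assoc]
    gcongr
    refine h1.trans ?_
    gcongr
  · intro x κ hκ hκ1 hsep
    have h1 := multiset_prod_dist_lower hκ f.roots
      fun ζ hζ => (hb K hK x ζ).2 κ hκ hκ1 fun k hk => hsep k hk ζ hζ
    simp_rw [norm_eval_eq]
    rw [Finset.prod_mul_distrib, Finset.prod_const, Finset.card_range, mul_pow, mul_assoc,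
      mul_assoc]
    gcongr
    refine le_trans ?_ h1
    rw [mul_assoc]
    have : κ ^ D ≤ κ ^ f.roots.card := pow_le_pow_of_le_one hκ.le hκ1 hcard
    gcongr

lemma volume_near_point_le (t κ : ℝ) (w : ℂ) :
    volume {x ∈ Set.Ioc (0:ℝ) 1 | ‖circ (x + t) - w‖ < κ} ≤ ENNReal.ofReal (3 * κ) := by
  rcases Set.eq_empty_or_nonempty {x ∈ Set.Ioc (0:ℝ) 1 | ‖circ (x + t) - w‖ < κ} with he | ⟨x0, hx0⟩
  · rw [he, measure_empty]
    exact zero_le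
  have hκ : 0 < κ := (norm_nonneg _).trans_lt hx0.2
  have hsub : {x ∈ Set.Ioc (0:ℝ) 1 | ‖circ (x + t) - w‖ < κ} ⊆
      ⋃ j ∈ Finset.Icc (-1 : ℤ) 1, Metric.ball (x0 + j) (κ / 2) := by
    intro y hy
    have h1 : ‖circ (y + t) - circ (x0 + t)‖ < 2 * κ := by
      calc _ = ‖(circ (y + t) - w) - (circ (x0 + t) - w)‖ := by congr 1; ring
        _ ≤ _ := norm_sub_le _ _
        _ < _ := by linarith [hy.2, hx0.2]
    rw [norm_circ_sub_circ, show y + t - (x0 + t) = y - x0 by ring] at h1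
    have h2 := four_mul_le_norm_one_sub_circ (y - x0)
    have h3 := abs_sub_round (y - x0)
    have h4 : |(round (y - x0) : ℝ)| < 2 := by
      have a1 := hy.1.1
      have a2 := hy.1.2
      have a3 := hx0.1.1
      have a4 := hx0.1.2
      rw [abs_le] at h3
      rw [abs_lt]
      constructor <;> linarith
    have h5 : |round (y - x0)| < 2 := by exact_mod_cast h4
    rw [abs_lt] at h5
    simp only [Set.mem_iUnion]
    refine ⟨round (y - x0), Finset.mem_Icc.2 ⟨by omega, by omega⟩, ?_⟩
    rw [Metric.mem_ball, Real.dist_eq, show y - (x0 + round (y - x0)) = y - x0 - round (y - x0) by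
      ring]
    linarith
  refine (measure_mono hsub).trans ((measure_biUnion_finset_le _ _).trans ?_)
  simp only [Real.volume_ball, Finset.sum_const, nsmul_eq_mul]
  rw [show 2 * (κ / 2) = κ by ring, ENNReal.ofReal_mul (by norm_num)]
  gcongr
  simp

lemma volume_near_roots_le (f : Polynomial ℂ) {D K : ℕ} (hD : f.natDegree ≤ D) (ω κ : ℝ) :
    volume {x ∈ Set.Ioc (0:ℝ) 1 | ∃ k < K, ∃ w ∈ f.roots, ‖circ (x + k * ω) - w‖ < κ} ≤
      ENNReal.ofReal (K * D * (3 * κ)) := by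
  have hsub : {x ∈ Set.Ioc (0:ℝ) 1 | ∃ k < K, ∃ w ∈ f.roots, ‖circ (x + k * ω) - w‖ < κ} ⊆
      ⋃ q ∈ Finset.range K ×ˢ f.roots.toFinset,
        {x ∈ Set.Ioc (0:ℝ) 1 | ‖circ (x + q.1 * ω) - q.2‖ < κ} := by
    rintro x ⟨hx, k, hk, w, hw, hlt⟩
    simp only [Set.mem_iUnion]
    exact ⟨(k, w), Finset.mem_product.2 ⟨Finset.mem_range.2 hk, Multiset.mem_toFinset.2 hw⟩, hx, hlt⟩
  have hcard : f.roots.toFinset.card ≤ D :=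
    (Multiset.toFinset_card_le _).trans (f.card_roots'.trans hD)
  calc _ ≤ _ := measure_mono hsub
    _ ≤ _ := measure_biUnion_finset_le _ _
    _ ≤ ∑ q ∈ Finset.range K ×ˢ f.roots.toFinset, ENNReal.ofReal (3 * κ) :=
        Finset.sum_le_sum fun q _ => volume_near_point_le _ _ _
    _ = ((K * f.roots.toFinset.card : ℕ) : ENNReal) * ENNReal.ofReal (3 * κ) := by
        rw [Finset.sum_const, Finset.card_product, Finset.card_range, nsmul_eq_mul]
    _ ≤ ((K * D : ℕ) : ENNReal) * ENNReal.ofReal (3 * κ) := by gcongr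
    _ = _ := by
        rw [← Nat.cast_mul, ENNReal.ofReal_mul (p := ((K * D : ℕ) : ℝ)) (Nat.cast_nonneg _),
          ENNReal.ofReal_natCast]

/-! ### Trigonometric approximation of periodic holomorphic functions -/

lemma integral_shift {ρ : ℝ} {h : ℂ → ℂ} (hd : DifferentiableOn ℂ h {z : ℂ | |z.im| < ρ})
    (hp : ∀ z, h (z + 1) = h z) {y : ℝ} (hy : |y| < ρ) :
    ∫ x in (0:ℝ)..1, h x = ∫ x in (0:ℝ)..1, h (x + y * Complex.I) := by
  have H := Complex.integral_boundary_rect_eq_zero_of_differentiableOn h 0 (1 + y * Complex.I)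
    (hd.mono ?_)
  · simp only [Complex.zero_re, Complex.zero_im, Complex.add_re, Complex.one_re, Complex.mul_re,
      Complex.ofReal_re, Complex.I_re, mul_zero, Complex.ofReal_im, Complex.I_im, mul_one, sub_self,
      add_zero, Complex.add_im, Complex.one_im, Complex.mul_im, zero_add, Complex.ofReal_zero,
      zero_mul, Complex.ofReal_one] at H
    have e : ∀ t : ℝ, h (1 + t * Complex.I) = h (t * Complex.I) := fun t => by
      rw [add_comm, hp]
    simp only [e] at H
    linear_combination H
  · intro z hz
    have h2 := hz.2
    simp only [Complex.zero_im, Complex.add_im, Complex.one_im, Complex.mul_im, Complex.ofReal_re,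
      Complex.I_im, mul_one, Complex.ofReal_im, Complex.I_re, mul_zero, add_zero, zero_add,
      Set.mem_preimage] at h2
    have h3 : |z.im| ≤ |y| := by
      rcases Set.mem_uIcc.1 h2 with h | h <;> rw [abs_le] <;>
        constructor <;> nlinarith [le_abs_self y, neg_abs_le y, abs_nonneg y]
    exact h3.trans_lt hy

/-- Exponential decay of the Fourier coefficients of a holomorphic function on a strip, obtained by
moving the contour of integration. -/
lemma fourier_decay {ρ r B : ℝ} (hr : 0 ≤ r) (hrρ : r < ρ) {g : ℂ → ℂ}
    (hd : DifferentiableOn ℂ g {z : ℂ | |z.im| < ρ}) (hp : ∀ z, g (z + 1) = g z)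
    (hB : ∀ z : ℂ, |z.im| < ρ → ‖g z‖ ≤ B) (m : ℤ) :
    ‖∫ x in (0:ℝ)..1, Complex.exp (-(2 * Real.pi * Complex.I * m * x)) * g x‖ ≤
      B * Real.exp (-(2 * Real.pi * r)) ^ m.natAbs := by
  obtain ⟨y, hy, hym⟩ : ∃ y : ℝ, |y| = r ∧ m * y = -(m.natAbs * r) := by
    rcases le_total 0 m with h | h
    · refine ⟨-r, by rw [abs_neg, abs_of_nonneg hr], ?_⟩
      have : (m.natAbs : ℝ) = (m : ℝ) := by
        rw [Nat.cast_natAbs, abs_of_nonneg h]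
      rw [this]; ring
    · refine ⟨r, abs_of_nonneg hr, ?_⟩
      have : (m.natAbs : ℝ) = -(m : ℝ) := by
        rw [Nat.cast_natAbs, abs_of_nonpos h, Int.cast_neg]
      rw [this]; ring
  have hsh := integral_shift (ρ := ρ) (y := y)
    (h := fun z => Complex.exp (-(2 * Real.pi * Complex.I * m * z)) * g z) ?_ ?_ (hy ▸ hrρ)
  · rw [hsh]
    have := intervalIntegral.norm_integral_le_of_norm_le_const (a := (0:ℝ)) (b := 1)
      (C := B * Real.exp (-(2 * Real.pi * r)) ^ m.natAbs)
      (f := fun x : ℝ => Complex.exp (-(2 * Real.pi * Complex.I * m * (x + y * Complex.I))) *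
        g (x + y * Complex.I)) ?_
    · simpa using this
    · intro x _
      rw [norm_mul, mul_comm, Complex.norm_exp, ← Real.exp_nat_mul]
      have e1 : (-(2 * Real.pi * Complex.I * m * (x + y * Complex.I)) : ℂ).re =
          m.natAbs * -(2 * Real.pi * r) := by
        have : (-(2 * Real.pi * Complex.I * m * (x + y * Complex.I)) : ℂ).re =
            2 * Real.pi * (m * y) := by
          simp
          ring
        rw [this, hym]; ring
      rw [e1]
      gcongr
      apply hB
      simpa [hy] using hrρ
  · refine DifferentiableOn.mul ?_ hd
    fun_prop
  · intro z
    simp only [hp]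
    congr 1
    rw [Complex.exp_eq_exp_iff_exists_int]
    exact ⟨-m, by push_cast; ring⟩

lemma summable_pow_natAbs {t : ℝ} (h0 : 0 ≤ t) (h1 : t < 1) :
    Summable fun m : ℤ => t ^ m.natAbs := by
  refine Summable.of_nat_of_neg ?_ ?_
  · simpa using summable_geometric_of_lt_one h0 h1
  · simpa using summable_geometric_of_lt_one h0 h1

lemma hasSum_fourier_circ {ρ r B : ℝ} (hr : 0 < r) (hrρ : r < ρ) {g : ℂ → ℂ}
    (hd : DifferentiableOn ℂ g {z : ℂ | |z.im| < ρ}) (hp : ∀ z, g (z + 1) = g z)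
    (hB : ∀ z : ℂ, |z.im| < ρ → ‖g z‖ ≤ B) :
    ∃ c : ℤ → ℂ, (∀ m, ‖c m‖ ≤ B * Real.exp (-(2 * Real.pi * r)) ^ m.natAbs) ∧
      ∀ x : ℝ, HasSum (fun m : ℤ => c m * circ x ^ m) (g x) := by
  have hper : Function.Periodic (fun x : ℝ => g x) 1 := fun x => by
    simp only [Complex.ofReal_add, Complex.ofReal_one, hp]
  have hcg : Continuous fun x : ℝ => g x := by
    rw [continuous_iff_continuousAt]
    intro x
    have ho : {z : ℂ | |z.im| < ρ} ∈ nhds (x : ℂ) := by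
      refine (isOpen_lt (by fun_prop) continuous_const).mem_nhds ?_
      simpa using hr.trans hrρ
    exact (hd.differentiableAt ho).continuousAt.comp (Complex.continuous_ofReal.continuousAt)
  have hcl : Continuous hper.lift := by
    exact hcg.quotient_lift _
  let G : C(AddCircle (1:ℝ), ℂ) := ⟨hper.lift, hcl⟩
  have hco : ∀ m : ℤ, fourierCoeff G m =
      ∫ x in (0:ℝ)..1, Complex.exp (-(2 * Real.pi * Complex.I * m * x)) * g x := by
    intro m
    rw [fourierCoeff_eq_intervalIntegral _ _ 0]
    simp only [zero_add, div_one, one_smul]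
    refine intervalIntegral.integral_congr fun x _ => ?_
    simp only [smul_eq_mul]
    rw [fourier_coe_apply]
    congr 2
    push_cast
    ring
  have hdec : ∀ m, ‖fourierCoeff G m‖ ≤ B * Real.exp (-(2 * Real.pi * r)) ^ m.natAbs := fun m => by
    rw [hco]
    exact fourier_decay hr.le hrρ hd hp hB m
  refine ⟨fourierCoeff G, hdec, fun x => ?_⟩
  have hs : Summable (fourierCoeff G) := by
    refine Summable.of_norm_bounded ((summable_pow_natAbs (Real.exp_nonneg _) ?_).mul_left B) hdec
    rw [Real.exp_lt_one_iff]
    have := Real.pi_pos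
    simp only [Left.neg_neg_iff]
    positivity
  have : HasSum _ (g x) := has_pointwise_sum_fourier_series_of_summable hs (x : AddCircle (1:ℝ))
  convert this using 2 with m
  rw [smul_eq_mul, fourier_coe_apply, ← circ_int_mul, circ]
  congr 2
  push_cast
  ring

/-- A periodic holomorphic function on a strip is approximated on the real line, exponentially well
in the degree, by trigonometric polynomials; these are written as `circ (-D x) P(circ x)`. -/
lemma trig_approx {ρ : ℝ} (hρ : 0 < ρ) :
    ∃ Z > (0:ℝ), ∃ τ > (0:ℝ), ∀ (g : ℂ → ℂ) (B : ℝ),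
      DifferentiableOn ℂ g {z : ℂ | |z.im| < ρ} → (∀ z, g (z + 1) = g z) →
      (∀ z : ℂ, |z.im| < ρ → ‖g z‖ ≤ B) → ∀ D : ℕ,
      ∃ P : Polynomial ℂ, P.natDegree ≤ 2 * D ∧
        ∀ x : ℝ, ‖g x - circ (-(D * x)) * P.eval (circ x)‖ ≤ Z * B * Real.exp (-(τ * D)) := by
  have hpi := Real.pi_pos
  set τ := Real.pi * (ρ / 2) with hτ
  have hτ0 : 0 < τ := by positivity
  set t := Real.exp (-τ) with ht
  have ht0 : 0 < t := Real.exp_pos _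
  have ht1 : t < 1 := by rw [ht, Real.exp_lt_one_iff]; linarith
  have hsum := summable_pow_natAbs ht0.le ht1
  refine ⟨∑' m : ℤ, t ^ m.natAbs, ?_, τ, hτ0, ?_⟩
  · exact hsum.tsum_pos (fun m => by positivity) 0 (by simp)
  intro g B hd hp hB D
  have hB0 : 0 ≤ B := (norm_nonneg _).trans (hB 0 (by simpa using hρ))
  obtain ⟨c, hc, hcs⟩ := hasSum_fourier_circ (r := ρ / 2) (by positivity) (by linarith) hd hp hB
  refine ⟨∑ j ∈ Finset.range (2 * D + 1), Polynomial.monomial j (c (j - D)), ?_, ?_⟩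
  · refine Polynomial.natDegree_sum_le_of_forall_le _ _ fun j hj => ?_
    refine (Polynomial.natDegree_monomial_le _).trans ?_
    have := Finset.mem_range.1 hj
    omega
  intro x
  set s := Finset.Icc (-(D:ℤ)) D with hs
  have hP : circ (-(D * x)) * Polynomial.eval (circ x)
      (∑ j ∈ Finset.range (2 * D + 1), Polynomial.monomial j (c (j - D))) =
      ∑ m ∈ s, c m * circ x ^ m := by
    rw [Polynomial.eval_finsetSum, Finset.mul_sum]
    refine Finset.sum_bij (fun j _ => (j:ℤ) - D) ?_ ?_ ?_ ?_
    · intro j hj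
      have := Finset.mem_range.1 hj
      rw [hs, Finset.mem_Icc]
      omega
    · intro j _ k _ h
      simpa using h
    · intro m hm
      rw [hs, Finset.mem_Icc] at hm
      exact ⟨(m + D).toNat, Finset.mem_range.2 (by omega), by omega⟩
    · intro j _
      rw [Polynomial.eval_monomial, zpow_sub₀ (circ_ne_zero x), zpow_natCast, zpow_natCast,
        circ_neg, circ_nat_mul]
      field_simp
  rw [hP]
  have h1 : HasSum (fun m : ℤ => if m ∈ s then 0 else c m * circ x ^ m)
      (g x - ∑ m ∈ s, c m * circ x ^ m) := by
    have h2 : HasSum (fun m : ℤ => if m ∈ s then c m * circ x ^ m else 0)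
        (∑ m ∈ s, c m * circ x ^ m) := by
      have h4 : ∑ m ∈ s, c m * circ x ^ m =
          ∑ m ∈ s, if m ∈ s then c m * circ x ^ m else 0 :=
        Finset.sum_congr rfl fun m hm => by simp [hm]
      rw [h4]
      exact hasSum_sum_of_ne_finset_zero fun b hb => by simp [hb]
    have h5 := (hcs x).sub h2
    have h6 : (fun m : ℤ => c m * circ x ^ m - if m ∈ s then c m * circ x ^ m else 0) =
        fun m : ℤ => if m ∈ s then 0 else c m * circ x ^ m := by
      funext m
      split_ifs <;> simp
    rwa [h6] at h5
  rw [← h1.tsum_eq]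
  have h3 : HasSum (fun m : ℤ => B * Real.exp (-(τ * D)) * t ^ m.natAbs)
      (B * Real.exp (-(τ * D)) * ∑' m : ℤ, t ^ m.natAbs) := hsum.hasSum.mul_left _
  refine (tsum_of_norm_bounded h3 fun m => ?_).trans (le_of_eq (by ring))
  split_ifs with hm
  · rw [norm_zero]; positivity
  · rw [norm_mul, norm_zpow, norm_circ, one_zpow, mul_one]
    refine (hc m).trans ?_
    rw [mul_assoc B]
    refine mul_le_mul_of_nonneg_left ?_ hB0
    have e1 : Real.exp (-(2 * Real.pi * (ρ / 2))) = t * t := by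
      rw [ht, ← Real.exp_add]; congr 1; rw [hτ]; ring
    rw [e1, mul_pow]
    gcongr
    have e2 : Real.exp (-(τ * D)) = t ^ D := by
      rw [ht, ← Real.exp_nat_mul]; congr 1; ring
    rw [e2]
    refine pow_le_pow_of_le_one ht0.le ht1.le ?_
    rw [hs, Finset.mem_Icc] at hm
    omega

/-! ### Selecting one combination of finitely many functions along an orbit segment -/

/-- Pigeonhole: among the `K + 1` combinations `a + (j / (K + 1)) b`, one is comparable with both `a`
and `b` at all of `K` prescribed points, since each point rules out at most one `j`. -/
lemma select_pair (K : ℕ) (a b : ℕ → ℂ) :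
    ∃ ζ : ℝ, 0 ≤ ζ ∧ ζ ≤ 1 ∧
      ∀ k < K, max ‖a k‖ ‖b k‖ ≤ 3 * (K + 1) * ‖a k + ζ * b k‖ := by
  by_contra! hcon
  have hK0 : (0:ℝ) < K + 1 := by positivity
  have hj : ∀ j ∈ Finset.range (K + 1), ∃ k ∈ Finset.range K,
      3 * (K + 1) * ‖a k + ((j / (K + 1) : ℝ) : ℂ) * b k‖ < max ‖a k‖ ‖b k‖ := by
    intro j hj
    have hjK : (j:ℝ) ≤ K + 1 := by
      have := Finset.mem_range.1 hj
      exact_mod_cast this.le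
    obtain ⟨k, hk, h⟩ := hcon (j / (K + 1)) (by positivity) ((div_le_one hK0).2 hjK)
    exact ⟨k, Finset.mem_range.2 hk, h⟩
  choose! κ hκ hlt using hj
  obtain ⟨i, hi, j, hj, hij, hk⟩ := Finset.exists_ne_map_eq_of_card_lt_of_maps_to
    (s := Finset.range (K + 1)) (t := Finset.range K) (by simp) hκ
  have h1 := hlt i hi
  have h2 := hlt j hj
  rw [← hk] at h2
  set k := κ i
  set M := max ‖a k‖ ‖b k‖ with hM
  have hdist : (1:ℝ) ≤ |(i:ℝ) - j| := by
    have : (1:ℤ) ≤ |(i:ℤ) - j| := Int.one_le_abs (by omega)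
    exact_mod_cast this
  have hM0 : 0 < M := lt_of_le_of_lt (by positivity) h1
  have hb : 3 * ‖b k‖ < 2 * M := by
    have e : (((i:ℝ) - j : ℝ) : ℂ) * b k = (K + 1) *
        ((a k + ((i / (K + 1) : ℝ) : ℂ) * b k) - (a k + ((j / (K + 1) : ℝ) : ℂ) * b k)) := by
      have : (K + 1 : ℂ) ≠ 0 := by exact_mod_cast hK0.ne'
      push_cast
      field_simp
      ring
    have e2 : |(i:ℝ) - j| * ‖b k‖ ≤ (K + 1) * (‖a k + ((i / (K + 1) : ℝ) : ℂ) * b k‖ +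
        ‖a k + ((j / (K + 1) : ℝ) : ℂ) * b k‖) := by
      have := congrArg norm e
      rw [norm_mul, norm_mul, Complex.norm_real, Real.norm_eq_abs] at this
      rw [this]
      have e3 : ‖(K + 1 : ℂ)‖ = K + 1 := by
        have : (K + 1 : ℂ) = ((K + 1 : ℕ) : ℂ) := by push_cast; rfl
        rw [this, Complex.norm_natCast]; push_cast; rfl
      rw [e3]
      gcongr
      exact norm_sub_le _ _
    nlinarith [norm_nonneg (b k)]
  have hi1 : (i / (K + 1) : ℝ) ≤ 1 := by
    have := Finset.mem_range.1 hi
    rw [div_le_one hK0]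
    exact_mod_cast this.le
  have ha : 3 * ‖a k‖ < 3 * M := by
    have e : ‖a k‖ ≤ ‖a k + ((i / (K + 1) : ℝ) : ℂ) * b k‖ + ‖b k‖ := by
      calc ‖a k‖ = ‖(a k + ((i / (K + 1) : ℝ) : ℂ) * b k) - ((i / (K + 1) : ℝ) : ℂ) * b k‖ := by
            congr 1; ring
        _ ≤ ‖a k + ((i / (K + 1) : ℝ) : ℂ) * b k‖ + ‖((i / (K + 1) : ℝ) : ℂ) * b k‖ :=
            norm_sub_le _ _
        _ ≤ _ := by
            gcongr
            rw [norm_mul, Complex.norm_real, Real.norm_eq_abs, abs_of_nonneg (by positivity)]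
            exact mul_le_of_le_one_left (norm_nonneg _) hi1
    have : 3 * ‖a k + ((i / (K + 1) : ℝ) : ℂ) * b k‖ ≤
        3 * (K + 1) * ‖a k + ((i / (K + 1) : ℝ) : ℂ) * b k‖ := by
      have : (0:ℝ) ≤ K := by positivity
      nlinarith [norm_nonneg (a k + ((i / (K + 1) : ℝ) : ℂ) * b k), mul_nonneg this
        (norm_nonneg (a k + ((i / (K + 1) : ℝ) : ℂ) * b k))]
    linarith
  rcases max_choice ‖a k‖ ‖b k‖ with h | h <;> rw [← hM] at h <;> linarith

/-- One combination with coefficients in `[0, 1]` dominates, up to a factor polynomial in `K`, each of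
finitely many functions at `K` prescribed points. -/
lemma select_family {ι : Type*} [DecidableEq ι] (K : ℕ) (v : ι → ℕ → ℂ) (s : Finset ι) :
    ∃ β : ι → ℝ, (∀ i, 0 ≤ β i ∧ β i ≤ 1) ∧
      ∀ k < K, ∀ i ∈ s, ‖v i k‖ ≤ (3 * (K + 1)) ^ s.card * ‖∑ i ∈ s, (β i : ℂ) * v i k‖ := by
  induction s using Finset.induction_on with
  | empty => exact ⟨fun _ => 0, by simp, by simp⟩
  | insert j s hj ih =>
    obtain ⟨β, hβ, hs⟩ := ih
    obtain ⟨ζ, hζ0, hζ1, hζ⟩ := select_pair K (fun k => ∑ i ∈ s, (β i : ℂ) * v i k) (v j)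
    refine ⟨Function.update β j ζ, fun i => ?_, fun k hk i hi => ?_⟩
    · by_cases h : i = j
      · subst h; simp [hζ0, hζ1]
      · simp [h, hβ i]
    have e : ∑ i ∈ insert j s, ((Function.update β j ζ i : ℝ) : ℂ) * v i k =
        ∑ i ∈ s, (β i : ℂ) * v i k + ζ * v j k := by
      rw [Finset.sum_insert hj, add_comm, Function.update_self]
      congr 1
      refine Finset.sum_congr rfl fun l hl => ?_
      have hlj : l ≠ j := fun h => hj (by rwa [h] at hl)
      rw [Function.update_of_ne hlj]
    rw [e, Finset.card_insert_of_notMem hj]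
    have h3 : (1:ℝ) ≤ 3 * (K + 1) := by
      have : (0:ℝ) ≤ K := by positivity
      linarith
    have hz := hζ k hk
    rcases Finset.mem_insert.1 hi with rfl | hi
    · calc ‖v i k‖ ≤ _ := le_max_right _ _
        _ ≤ _ := hz
        _ ≤ _ := by
            gcongr
            exact le_self_pow₀ h3 (by omega)
    · calc ‖v i k‖ ≤ _ := hs k hk i hi
        _ ≤ (3 * (K + 1)) ^ s.card * (3 * (K + 1) * ‖∑ i ∈ s, (β i : ℂ) * v i k + ζ * v j k‖) := by
            gcongr
            exact (le_max_left _ _).trans hz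
        _ = _ := by ring

/-! ### Birkhoff sums of a function comparable to finitely many polynomials -/

/-- If `exp L` is comparable to the maximum of finitely many polynomials on the circle, the sums of `L`
over orbit segments of length `K` satisfy a one-sided comparison: the sum at a given point `x₀`
exceeds the sum at most other points by a controlled amount only. -/
lemma orbit_core {ω a : ℝ} (ha : 1 < a) (h : Diophantine ω a) :
    ∃ C > (0:ℝ), ∀ (ι : Type) [Fintype ι] (P : ι → Polynomial ℂ) (D : ℕ)
      (_ : ∀ i, (P i).natDegree ≤ D) (L : ℝ → ℝ) (S : ℝ)
      (_ : ∀ i x, ‖(P i).eval (circ x)‖ ≤ Real.exp (L x + S))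
      (_ : ∀ x, ∃ i, Real.exp (L x - S) ≤ ‖(P i).eval (circ x)‖)
      (K : ℕ) (_ : 1 ≤ K) (x₀ : ℝ), ∃ m : ℝ,
      ∑ k ∈ Finset.range K, L (x₀ + k * ω) ≤ m +
        (K * (S + Fintype.card ι * Real.log (3 * (K + 1))) +
          D * (C * (1 + Real.log K) ^ (a + 2))) ∧
      ∀ lam : ℝ, 0 ≤ lam → volume {x ∈ Set.Ioc (0:ℝ) 1 | ∑ k ∈ Finset.range K, L (x + k * ω) <
          m - (K * (S + Fintype.card ι) + D * (C * (1 + Real.log K) ^ (a + 2)) + lam * D)} ≤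
        ENNReal.ofReal (K * D * (3 * Real.exp (-lam))) := by
  classical
  obtain ⟨C, hC, hb⟩ := poly_bounds ha h
  refine ⟨C, hC, ?_⟩
  intro ι _ P D hD L S hU hLw K hK x₀
  set N := Fintype.card ι
  set B := C * (1 + Real.log K) ^ (a + 2)
  obtain ⟨β, hβ, hsel⟩ := select_family K (fun i k => (P i).eval (circ (x₀ + k * ω))) Finset.univ
  rw [Finset.card_univ] at hsel
  set f : Polynomial ℂ := ∑ i, Polynomial.C (β i : ℂ) * P i with hf
  have hfe : ∀ z, f.eval z = ∑ i, (β i : ℂ) * (P i).eval z := fun z => by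
    rw [hf, Polynomial.eval_finsetSum]
    simp
  have hfD : f.natDegree ≤ D := Polynomial.natDegree_sum_le_of_forall_le _ _ fun i _ =>
    (Polynomial.natDegree_C_mul_le _ _).trans (hD i)
  have h3 : (0:ℝ) < 3 * (K + 1) := by positivity
  have hlow : ∀ k < K, Real.exp (L (x₀ + k * ω) - S - N * Real.log (3 * (K + 1))) ≤
      ‖f.eval (circ (x₀ + k * ω))‖ := by
    intro k hk
    obtain ⟨i, hi⟩ := hLw (x₀ + k * ω)
    have h1 := hi.trans (hsel k hk i (Finset.mem_univ i))
    rw [← hfe] at h1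
    rw [Real.exp_sub, div_le_iff₀' (Real.exp_pos _), Real.exp_nat_mul, Real.exp_log h3]
    exact h1
  have hup : ∀ x, ‖f.eval (circ x)‖ ≤ Real.exp (L x + (S + N)) := by
    intro x
    rw [hfe]
    calc _ ≤ ∑ i, ‖(β i : ℂ) * (P i).eval (circ x)‖ := norm_sum_le _ _
      _ ≤ ∑ i : ι, Real.exp (L x + S) := by
          refine Finset.sum_le_sum fun i _ => ?_
          rw [norm_mul, Complex.norm_real, Real.norm_eq_abs, abs_of_nonneg (hβ i).1]
          exact (mul_le_of_le_one_left (norm_nonneg _) (hβ i).2).trans (hU i x)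
      _ = N * Real.exp (L x + S) := by
          rw [Finset.sum_const, Finset.card_univ, nsmul_eq_mul]
      _ ≤ Real.exp N * Real.exp (L x + S) := by
          gcongr
          linarith [Real.add_one_le_exp (N : ℝ)]
      _ = _ := by rw [← Real.exp_add]; congr 1; ring
  have hf0 : f ≠ 0 := by
    intro h0
    have := hlow 0 (by omega)
    rw [h0, Polynomial.eval_zero, norm_zero] at this
    exact absurd this (not_le.2 (Real.exp_pos _))
  obtain ⟨μ, hμ, hμ1, hμ2⟩ := hb K hK f hf0 D hfD
  refine ⟨K * Real.log μ, ?_, ?_⟩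
  · have h1 : Real.exp (∑ k ∈ Finset.range K, (L (x₀ + k * ω) - S - N * Real.log (3 * (K + 1)))) ≤
        Real.exp (K * Real.log μ + D * B) := by
      rw [Real.exp_sum, Real.exp_add, Real.exp_nat_mul, Real.exp_log hμ]
      refine le_trans ?_ (hμ1 x₀)
      exact Finset.prod_le_prod (fun _ _ => Real.exp_nonneg _) fun k hk =>
        hlow k (Finset.mem_range.1 hk)
    have h2 := Real.exp_le_exp.1 h1
    rw [Finset.sum_sub_distrib, Finset.sum_sub_distrib, Finset.sum_const, Finset.sum_const,
      Finset.card_range, nsmul_eq_mul, nsmul_eq_mul] at h2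
    linarith
  · intro lam hlam
    refine (measure_mono ?_).trans (volume_near_roots_le f (K := K) hfD ω (Real.exp (-lam)))
    rintro x ⟨hx, hlt⟩
    refine ⟨hx, ?_⟩
    by_contra! hsep
    have h1 := hμ2 x (Real.exp (-lam)) (Real.exp_pos _) (Real.exp_le_one_iff.2 (by linarith)) hsep
    have h2 : Real.exp (K * Real.log μ - D * B - lam * D) ≤
        Real.exp (∑ k ∈ Finset.range K, (L (x + k * ω) + (S + N))) := by
      rw [Real.exp_sum]
      calc _ = μ ^ K * Real.exp (-(D * B)) * Real.exp (-lam) ^ D := by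
            rw [sub_eq_add_neg, sub_eq_add_neg, Real.exp_add, Real.exp_add, Real.exp_nat_mul,
              Real.exp_log hμ, ← Real.exp_nat_mul]
            congr 2
            ring
        _ ≤ _ := h1
        _ ≤ _ := Finset.prod_le_prod (fun _ _ => norm_nonneg _) fun k _ => hup _
    have h3 := Real.exp_le_exp.1 h2
    rw [Finset.sum_add_distrib, Finset.sum_const, Finset.card_range, nsmul_eq_mul] at h3
    linarith

/-- Turning the one-sided comparison of `orbit_core` into two-sided deviation estimates for Birkhoff sums
around their mean: averaging over the torus gives the upper bound at every point, and starting from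
a point where the sum is at least its mean gives the lower bound off a small set. -/
lemma orbit_deviation {ω a : ℝ} (ha : 1 < a) (h : Diophantine ω a) (S C₁ : ℝ) (hS : 1 ≤ S)
    (hC₁ : 1 ≤ C₁) (N : ℕ) :
    ∃ Q > (0:ℝ), ∀ (ι : Type) [Fintype ι] (_ : Fintype.card ι ≤ N) (P : ι → Polynomial ℂ) (n D : ℕ)
      (_ : 2 ≤ n) (_ : (D : ℝ) ≤ C₁ * n)
      (_ : ∀ i, (P i).natDegree ≤ D) (L : ℝ → ℝ) (_ : Continuous L) (_ : ∀ x, L (x + 1) = L x)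
      (_ : ∀ x, |L x| ≤ S * n)
      (_ : ∀ i x, ‖(P i).eval (circ x)‖ ≤ Real.exp (L x + S))
      (_ : ∀ x, ∃ i, Real.exp (L x - S) ≤ ‖(P i).eval (circ x)‖)
      (K : ℕ) (_ : 1 ≤ K) (_ : K ≤ n),
      (∀ x, ∑ k ∈ Finset.range K, L (x + k * ω) ≤
        K * (∫ x in (0:ℝ)..1, L x) + n * (Q * (1 + Real.log n) ^ (a + 2))) ∧
      ∀ lam : ℝ, 0 ≤ lam → volume {x ∈ Set.Ioc (0:ℝ) 1 | ∑ k ∈ Finset.range K, L (x + k * ω) <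
          K * (∫ x in (0:ℝ)..1, L x) - n * (Q * (1 + Real.log n) ^ (a + 2)) - lam * D} ≤
        ENNReal.ofReal (K * D * (3 * Real.exp (-lam))) := by
  obtain ⟨C, hC, hcore⟩ := orbit_core ha h
  refine ⟨2 * S + (S + N) + (S + N * 6) + 2 * (C₁ * C) + C₁ * (Real.log (3 * C₁) + 3), ?_, ?_⟩
  · have : 0 ≤ Real.log (3 * C₁) := Real.log_nonneg (by linarith)
    positivity
  intro ι _ hN P n D hn hDn hD L hLc hLp hLb hU hLw K hK hKn
  have hN' : (Fintype.card ι : ℝ) ≤ N := by exact_mod_cast hN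
  have hn2 : (2:ℝ) ≤ n := by exact_mod_cast hn
  have hK1 : (1:ℝ) ≤ K := by exact_mod_cast hK
  have hKn' : (K:ℝ) ≤ n := by exact_mod_cast hKn
  have hlogn : 0 ≤ Real.log n := Real.log_nonneg (by linarith)
  have hlogK : 0 ≤ Real.log K := Real.log_nonneg hK1
  have hlogKn : Real.log K ≤ Real.log n := Real.log_le_log (by linarith) hKn'
  have hlC : 0 ≤ Real.log (3 * C₁) := Real.log_nonneg (by linarith)
  set l := (1 + Real.log n) ^ (a + 2) with hl
  have hl1 : 1 + Real.log n ≤ l := by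
    rw [hl]
    exact Real.self_le_rpow_of_one_le (by linarith) (by linarith)
  have hBl : C * (1 + Real.log K) ^ (a + 2) ≤ C * l := by
    rw [hl]; gcongr
  set B := C * (1 + Real.log K) ^ (a + 2) with hB
  have hB0 : 0 ≤ B := by positivity
  set Φ : ℝ → ℝ := fun x => ∑ k ∈ Finset.range K, L (x + k * ω) with hΦ
  have hΦc : Continuous Φ := by rw [hΦ]; fun_prop
  have hPhiInt : ∫ x in (0:ℝ)..1, Φ x = K * ∫ x in (0:ℝ)..1, L x := by
    rw [hΦ, intervalIntegral.integral_finsetSum]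
    · have : ∀ k ∈ Finset.range K, ∫ x in (0:ℝ)..1, L (x + k * ω) = ∫ x in (0:ℝ)..1, L x := by
        intro k _
        rw [intervalIntegral.integral_comp_add_right]
        have hp : Function.Periodic L 1 := hLp
        have := hp.intervalIntegral_add_eq (0 + k * ω) 0
        rw [show (1:ℝ) + k * ω = 0 + k * ω + 1 by ring, this]
        norm_num
      rw [Finset.sum_congr rfl this, Finset.sum_const, Finset.card_range, nsmul_eq_mul]
    · intro k _
      exact (by fun_prop : Continuous fun x => L (x + k * ω)).intervalIntegrable _ _
  set M := K * ∫ x in (0:ℝ)..1, L x with hM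
  have hΦb : ∀ x, |Φ x| ≤ K * (S * n) := fun x => by
    calc |Φ x| ≤ ∑ k ∈ Finset.range K, |L (x + k * ω)| := Finset.abs_sum_le_sum_abs _ _
      _ ≤ ∑ k ∈ Finset.range K, S * n := Finset.sum_le_sum fun k _ => hLb _
      _ = _ := by rw [Finset.sum_const, Finset.card_range, nsmul_eq_mul]
  have hD0 : (0:ℝ) ≤ D := by positivity
  -- the cost of the selection
  have hlog3 : Real.log (3 * (K + 1)) ≤ 6 * l := by
    have e1 : Real.log (3 * (K + 1)) ≤ Real.log (6 * n) :=
      Real.log_le_log (by positivity) (by linarith)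
    rw [Real.log_mul (x := 6) (by norm_num) (by linarith)] at e1
    have e2 : Real.log 6 ≤ 5 := by
      have := Real.log_le_sub_one_of_pos (x := 6) (by norm_num)
      linarith
    linarith
  have hlog30 : 0 ≤ Real.log (3 * (K + 1)) := Real.log_nonneg (by linarith)
  have hl0 : 1 ≤ l := by linarith
  have hn0 : (0:ℝ) ≤ n := by linarith
  have hc1 : K * (S + Fintype.card ι * Real.log (3 * (K + 1))) ≤ n * ((S + N * 6) * l) := by
    have : S + Fintype.card ι * Real.log (3 * (K + 1)) ≤ (S + N * 6) * l := by
      have a1 : S ≤ S * l := le_mul_of_one_le_right (by linarith) hl0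
      have a2 : Fintype.card ι * Real.log (3 * (K + 1)) ≤ N * (6 * l) := by gcongr
      linarith
    gcongr
  have hc2 : D * B ≤ n * (C₁ * C * l) := by
    calc D * B ≤ (C₁ * n) * (C * l) := by gcongr
      _ = _ := by ring
  have hc3 : K * (S + Fintype.card ι) ≤ n * ((S + N) * l) := by
    have : S + (Fintype.card ι : ℝ) ≤ (S + N) * l := by
      have : (S + N : ℝ) ≤ (S + N) * l := le_mul_of_one_le_right (by positivity) hl0
      linarith
    gcongr
  -- with this threshold the exceptional set has measure at most `1 / n`
  set lam₀ := Real.log (3 * C₁) + 3 * Real.log n with hlam₀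
  have hlam0 : 0 ≤ lam₀ := by positivity
  have hc4 : lam₀ * D ≤ n * (C₁ * (Real.log (3 * C₁) + 3) * l) := by
    have : lam₀ ≤ (Real.log (3 * C₁) + 3) * l := by
      have : Real.log (3 * C₁) ≤ Real.log (3 * C₁) * l := le_mul_of_one_le_right hlC hl0
      linarith
    calc lam₀ * D ≤ ((Real.log (3 * C₁) + 3) * l) * (C₁ * n) := by gcongr
      _ = _ := by ring
  have hc5 : 2 * (K * S) ≤ n * (2 * S * l) := by
    have : S ≤ S * l := le_mul_of_one_le_right (by linarith) hl0
    calc 2 * (K * S) ≤ 2 * (n * (S * l)) := by gcongr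
      _ = _ := by ring
  have hsmall : K * D * (3 * Real.exp (-lam₀)) ≤ 1 / n := by
    have e1 : Real.exp (-lam₀) = (3 * C₁ * n ^ 3)⁻¹ := by
      rw [Real.exp_neg, hlam₀, Real.exp_add, Real.exp_log (by linarith),
        show 3 * Real.log n = (3:ℕ) * Real.log n by norm_num, Real.exp_nat_mul,
        Real.exp_log (by linarith)]
    rw [e1]
    calc K * D * (3 * (3 * C₁ * n ^ 3)⁻¹) ≤ n * (C₁ * n) * (3 * (3 * C₁ * (n:ℝ) ^ 3)⁻¹) := by
          gcongr
      _ = 1 / n := by field_simp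
  have hmean : ∀ m : ℝ, (∀ lam : ℝ, 0 ≤ lam → volume {x ∈ Set.Ioc (0:ℝ) 1 | Φ x <
          m - (K * (S + Fintype.card ι) + D * B + lam * D)} ≤
        ENNReal.ofReal (K * D * (3 * Real.exp (-lam)))) →
      m ≤ M + (K * (S + Fintype.card ι) + D * B + lam₀ * D) + 2 * (K * S) := by
    intro m hm
    set T := m - (K * (S + Fintype.card ι) + D * B + lam₀ * D) with hT
    set bad := {x ∈ Set.Ioc (0:ℝ) 1 | Φ x < T} with hbad
    have hvol : volume bad ≤ ENNReal.ofReal (1 / n) :=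
      (hm lam₀ hlam0).trans (ENNReal.ofReal_le_ofReal hsmall)
    have hbm : MeasurableSet bad :=
      measurableSet_Ioc.inter (measurableSet_lt hΦc.measurable measurable_const)
    have hreal : volume.real bad ≤ 1 / n :=
      ENNReal.toReal_le_of_le_ofReal (by positivity) hvol
    have hTb : T ≤ K * (S * n) := by
      by_contra! hcon
      have hall : bad = Set.Ioc (0:ℝ) 1 := by
        ext x
        simp only [hbad, Set.mem_ofPred_eq, and_iff_left_iff_imp]
        intro _
        exact (le_abs_self _).trans (hΦb x) |>.trans_lt hcon
      rw [hall] at hreal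
      simp only [Measure.real, Real.volume_Ioc, sub_zero, ENNReal.ofReal_one,
        ENNReal.toReal_one] at hreal
      have : 1 / (n:ℝ) ≤ 1 / 2 := by gcongr
      linarith
    have hpt : ∀ x ∈ Set.Ioc (0:ℝ) 1,
        T - bad.indicator (fun _ => 2 * (K * (S * n))) x ≤ Φ x := by
      intro x hx
      by_cases hxb : x ∈ bad
      · rw [Set.indicator_of_mem hxb]
        have := (abs_le.1 (hΦb x)).1
        linarith
      · rw [Set.indicator_of_notMem hxb]
        simp only [hbad, Set.mem_ofPred_eq, not_and, not_lt] at hxb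
        simpa using hxb hx
    have hi : Integrable (bad.indicator fun _ => (2 * (K * (S * n)) : ℝ))
        (volume.restrict (Set.Ioc (0:ℝ) 1)) :=
      (integrable_const _).indicator hbm
    have hineq : ∫ x in Set.Ioc (0:ℝ) 1, (T - bad.indicator (fun _ => 2 * (K * (S * n))) x) ≤
        ∫ x in Set.Ioc (0:ℝ) 1, Φ x := by
      refine setIntegral_mono_on ((integrable_const _).sub hi) ?_ measurableSet_Ioc hpt
      exact (hΦc.integrableOn_Icc (a := 0) (b := 1)).mono_set Set.Ioc_subset_Icc_self
    have hPhiInt' : ∫ x in Set.Ioc (0:ℝ) 1, Φ x = M := by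
      rw [← hPhiInt, intervalIntegral.integral_of_le zero_le_one]
    rw [hPhiInt', integral_sub (integrable_const _) hi, integral_indicator hbm,
      Measure.restrict_restrict hbm, Set.inter_eq_left.2 (fun x hx => hx.1)] at hineq
    simp only [integral_const, smul_eq_mul, MeasurableSet.univ, measureReal_restrict_apply,
      Set.univ_inter, Real.volume_real_Ioc, sub_zero, zero_le_one, sup_of_le_left, one_mul] at hineq
    have : volume.real bad * (2 * (K * (S * n))) ≤ 1 / n * (2 * (K * (S * n))) := by gcongr
    have e : 1 / (n:ℝ) * (2 * (K * (S * n))) = 2 * (K * S) := by field_simp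
    linarith
  constructor
  · intro x
    obtain ⟨m, hm1, hm2⟩ := hcore ι P D hD L S hU hLw K hK x
    have := hmean m hm2
    nlinarith
  · intro lam hlam
    obtain ⟨x₀, hx₀⟩ : ∃ x₀, M ≤ Φ x₀ := by
      by_contra! hcon
      have : ∫ x in (0:ℝ)..1, Φ x < ∫ x in (0:ℝ)..1, M :=
        intervalIntegral.integral_lt_integral_of_continuousOn_of_le_of_exists_lt zero_lt_one
          hΦc.continuousOn continuousOn_const (fun x _ => (hcon x).le)
          ⟨0, by simp, hcon 0⟩
      rw [hPhiInt] at this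
      simp at this
    obtain ⟨m, hm1, hm2⟩ := hcore ι P D hD L S hU hLw K hK x₀
    refine (measure_mono ?_).trans (hm2 lam hlam)
    rintro x ⟨hx, hlt⟩
    refine ⟨hx, hlt.trans_le ?_⟩
    have hm1' : Φ x₀ ≤ m + (K * (S + Fintype.card ι * Real.log (3 * (K + 1))) + D * B) := hm1
    have p1 : 0 ≤ n * (2 * S * l) := by positivity
    have p2 : 0 ≤ n * (C₁ * (Real.log (3 * C₁) + 3) * l) := by positivity
    nlinarith

/-! ### The deviation estimate for a single function -/

/-- Replacing holomorphic functions by trigonometric polynomials of degree `O(n)` in the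
comparison with `exp L`, at the cost of a constant factor. -/
lemma exists_polynomials {ρ S : ℝ} (hρ : 0 < ρ) (hS : 1 ≤ S) :
    ∃ C₁ : ℝ, 1 ≤ C₁ ∧ ∀ (ι : Type) [Fintype ι] (n : ℕ) (_ : 2 ≤ n) (L : ℝ → ℝ)
      (_ : ∀ x, |L x| ≤ S * n) (g : ι → ℂ → ℂ)
      (_ : ∀ i, DifferentiableOn ℂ (g i) {z : ℂ | |z.im| < ρ}) (_ : ∀ i z, g i (z + 1) = g i z)
      (_ : ∀ i (z : ℂ), |z.im| < ρ → ‖g i z‖ ≤ Real.exp (S * n))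
      (_ : ∀ i (x : ℝ), ‖g i x‖ ≤ Real.exp (L x + S))
      (_ : ∀ x : ℝ, ∃ i, Real.exp (L x - S) ≤ ‖g i x‖),
      ∃ (D : ℕ) (P : ι → Polynomial ℂ), (D : ℝ) ≤ C₁ * n ∧ (∀ i, (P i).natDegree ≤ D) ∧
        (∀ i x, ‖(P i).eval (circ x)‖ ≤ Real.exp (L x + (S + 1))) ∧
        ∀ x, ∃ i, Real.exp (L x - (S + 1)) ≤ ‖(P i).eval (circ x)‖ := by
  obtain ⟨Z, hZ, τ, hτ, happ⟩ := trig_approx hρ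
  refine ⟨2 * ((|Real.log Z| + 3 * S + 1) / τ + 1), ?_, ?_⟩
  · have : 0 ≤ (|Real.log Z| + 3 * S + 1) / τ := by positivity
    linarith
  intro ι _ n hn L hLb g hd hp hB hU hLw
  have hn2 : (2:ℝ) ≤ n := by exact_mod_cast hn
  set D := ⌈(|Real.log Z| + 2 * S * n + S + 1) / τ⌉₊ with hD
  have hD1 : |Real.log Z| + 2 * S * n + S + 1 ≤ τ * D := by
    rw [← div_le_iff₀' hτ]
    exact Nat.le_ceil _
  have hD2 : (D:ℝ) ≤ ((|Real.log Z| + 3 * S + 1) / τ + 1) * n := by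
    have h1 : (D:ℝ) < (|Real.log Z| + 2 * S * n + S + 1) / τ + 1 :=
      Nat.ceil_lt_add_one (by positivity)
    have h2 : (|Real.log Z| + 2 * S * n + S + 1) / τ ≤ (|Real.log Z| + 3 * S + 1) / τ * n := by
      rw [div_mul_eq_mul_div]
      gcongr
      nlinarith [abs_nonneg (Real.log Z)]
    linarith
  choose P hP1 hP2 using fun i => happ (g i) (Real.exp (S * n)) (hd i) (hp i) (hB i) D
  have herr : ∀ x, Z * Real.exp (S * n) * Real.exp (-(τ * D)) ≤ Real.exp (L x - S) / 2 := by
    intro x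
    have e1 : Z * Real.exp (S * n) * Real.exp (-(τ * D)) =
        Real.exp (Real.log Z + S * n - τ * D) := by
      rw [sub_eq_add_neg, Real.exp_add, Real.exp_add, Real.exp_log hZ]
    have e2 : Real.exp (L x - S) / 2 = Real.exp (L x - S - Real.log 2) := by
      rw [Real.exp_sub (L x - S), Real.exp_log two_pos]
    rw [e1, e2, Real.exp_le_exp]
    have := (abs_le.1 (hLb x)).1
    have := le_abs_self (Real.log Z)
    have := Real.log_two_lt_d9
    linarith
  have hnorm : ∀ i x, ‖circ (-(D * x)) * (P i).eval (circ x)‖ = ‖(P i).eval (circ x)‖ := by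
    intro i x
    rw [norm_mul, norm_circ, one_mul]
  have htwo : (2:ℝ) ≤ Real.exp 1 := by linarith [Real.add_one_le_exp (1:ℝ)]
  refine ⟨2 * D, P, ?_, hP1, ?_, ?_⟩
  · push_cast
    linarith
  · intro i x
    have h1 := (hP2 i x).trans (herr x)
    have h2 := hU i x
    have h3 : ‖(P i).eval (circ x)‖ ≤ ‖g i x‖ + Real.exp (L x - S) / 2 := by
      rw [← hnorm i x, norm_sub_rev] at *
      linarith [norm_le_norm_add_norm_sub' (circ (-(D * x)) * (P i).eval (circ x)) (g i x)]
    have h4 : Real.exp (L x - S) ≤ Real.exp (L x + S) := Real.exp_le_exp.2 (by linarith)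
    rw [← add_assoc, Real.exp_add _ 1]
    nlinarith [Real.exp_pos (L x + S)]
  · intro x
    obtain ⟨i, hi⟩ := hLw x
    refine ⟨i, ?_⟩
    have h1 := (hP2 i x).trans (herr x)
    have h3 : ‖g i x‖ ≤ ‖(P i).eval (circ x)‖ + Real.exp (L x - S) / 2 := by
      rw [← hnorm i x]
      linarith [norm_le_norm_add_norm_sub' (g i x) (circ (-(D * x)) * (P i).eval (circ x))]
    have h4 : Real.exp (L x - (S + 1)) * Real.exp 1 = Real.exp (L x - S) := by
      rw [← Real.exp_add]; congr 1; ring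
    nlinarith [Real.exp_pos (L x - (S + 1))]

lemma abs_orbit_sub_le {ω S : ℝ} {L : ℝ → ℝ} (hinc : ∀ x, |L (x + ω) - L x| ≤ S) (x : ℝ) (k : ℕ) :
    |L (x + k * ω) - L x| ≤ k * S := by
  induction k with
  | zero => simp
  | succ k ih =>
    have h1 := hinc (x + k * ω)
    have e : x + ((k + 1 : ℕ) : ℝ) * ω = x + k * ω + ω := by push_cast; ring
    rw [e]
    push_cast
    rw [abs_le] at *
    constructor <;> linarith

lemma abs_orbit_sum_sub_le {ω S : ℝ} (hS : 0 ≤ S) {L : ℝ → ℝ}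
    (hinc : ∀ x, |L (x + ω) - L x| ≤ S) (x : ℝ) (K : ℕ) :
    |∑ k ∈ Finset.range K, L (x + k * ω) - K * L x| ≤ K * (K * S) := by
  have e : ∑ k ∈ Finset.range K, L (x + k * ω) - K * L x =
      ∑ k ∈ Finset.range K, (L (x + k * ω) - L x) := by
    rw [Finset.sum_sub_distrib, Finset.sum_const, Finset.card_range, nsmul_eq_mul]
  rw [e]
  calc _ ≤ ∑ k ∈ Finset.range K, |L (x + k * ω) - L x| := Finset.abs_sum_le_sum_abs _ _
    _ ≤ ∑ k ∈ Finset.range K, K * S := by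
        refine Finset.sum_le_sum fun k hk => (abs_orbit_sub_le hinc x k).trans ?_
        have : (k:ℝ) ≤ K := by exact_mod_cast (Finset.mem_range.1 hk).le
        gcongr
    _ = _ := by rw [Finset.sum_const, Finset.card_range, nsmul_eq_mul]

set_option maxHeartbeats 1000000 in
/-- Large deviations for a function `L` at scale `n` which is almost invariant under the rotation by `ω`
and whose exponential is comparable to the maximum of boundedly many holomorphic functions. The
function is compared with its Birkhoff averages of length `K` proportional to `δ n`. -/
lemma scalar_ldt {ω a : ℝ} (ha : 1 < a) (h : Diophantine ω a) {ρ S : ℝ} (hρ : 0 < ρ) (hS : 1 ≤ S)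
    (N : ℕ) :
    ∃ c > (0:ℝ), ∃ C > (0:ℝ), ∀ (ι : Type) [Fintype ι] (_ : Fintype.card ι ≤ N)
      (n : ℕ) (_ : 2 ≤ n) (L : ℝ → ℝ) (_ : Continuous L) (_ : ∀ x, L (x + 1) = L x)
      (_ : ∀ x, |L x| ≤ S * n) (_ : ∀ x, |L (x + ω) - L x| ≤ S) (g : ι → ℂ → ℂ)
      (_ : ∀ i, DifferentiableOn ℂ (g i) {z : ℂ | |z.im| < ρ}) (_ : ∀ i z, g i (z + 1) = g i z)
      (_ : ∀ i (z : ℂ), |z.im| < ρ → ‖g i z‖ ≤ Real.exp (S * n))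
      (_ : ∀ i (x : ℝ), ‖g i x‖ ≤ Real.exp (L x + S))
      (_ : ∀ x : ℝ, ∃ i, Real.exp (L x - S) ≤ ‖g i x‖) (δ : ℝ) (_ : 0 < δ),
      volume {x ∈ Set.Ioc (0:ℝ) 1 | δ < |(1 / n : ℝ) * L x - (1 / n : ℝ) * ∫ x in (0:ℝ)..1, L x|} <
        ENNReal.ofReal (Real.exp (-c * δ ^ 2 * n + C * Real.log n ^ (a + 2))) := by
  obtain ⟨C₁, hC₁, hpoly⟩ := exists_polynomials hρ hS
  obtain ⟨Q, hQ, hdev⟩ := orbit_deviation ha h (S + 1) C₁ (by linarith) hC₁ N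
  set q := 1 + 1 / Real.log 2 with hq
  have hlog2 : 0 < Real.log 2 := Real.log_pos one_lt_two
  have hq0 : 0 < q := by positivity
  have hl3 : 0 ≤ Real.log (3 * C₁) := Real.log_nonneg (by linarith)
  set c := 1 / (16 * S * C₁) with hc
  have hc0 : 0 < c := by positivity
  set C' := Real.log (3 * C₁) + 2 + 16 * S ^ 2 * c + 32 * S * Q * c + 1 with hC'
  have hC'0 : 0 < C' := by positivity
  refine ⟨c, hc0, C' * q ^ (a + 2), by positivity, ?_⟩
  intro ι _ hN n hn L hLc hLp hLb hinc g hd hp hB hU hLw δ hδ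
  obtain ⟨D, P, hDn, hPD, hPU, hPL⟩ := hpoly ι n hn L hLb g hd hp hB hU hLw
  have hn2 : (2:ℝ) ≤ n := by exact_mod_cast hn
  have hn0 : (0:ℝ) < n := by linarith
  have hlogn : Real.log 2 ≤ Real.log n := Real.log_le_log two_pos hn2
  set l := (1 + Real.log n) ^ (a + 2) with hl
  have hl1 : 1 + Real.log n ≤ l := by
    rw [hl]
    exact Real.self_le_rpow_of_one_le (by linarith) (by linarith)
  have hql : C' * l ≤ C' * q ^ (a + 2) * Real.log n ^ (a + 2) := by
    rw [mul_assoc, ← Real.mul_rpow hq0.le (by linarith)]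
    have : 1 + Real.log n ≤ q * Real.log n := by
      have : 1 ≤ 1 / Real.log 2 * Real.log n := by
        rw [div_mul_eq_mul_div, one_mul, one_le_div hlog2]
        exact hlogn
      rw [hq]; linarith
    rw [hl]
    gcongr
  set M := ∫ x in (0:ℝ)..1, L x with hM
  set bad := {x ∈ Set.Ioc (0:ℝ) 1 | δ < |(1 / n : ℝ) * L x - (1 / n : ℝ) * M|} with hbad
  have hbad' : ∀ x ∈ bad, δ * n < |L x - M| := by
    intro x hx
    have h1 := hx.2
    rw [← mul_sub, abs_mul, abs_of_pos (by positivity : (0:ℝ) < 1 / n), div_mul_eq_mul_div,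
      one_mul, lt_div_iff₀ hn0] at h1
    exact h1
  suffices hmain : volume bad < ENNReal.ofReal (Real.exp (-c * δ ^ 2 * n + C' * l)) by
    refine hmain.trans_le (ENNReal.ofReal_le_ofReal (Real.exp_le_exp.2 ?_))
    linarith
  have htriv : volume bad ≤ 1 := by
    calc volume bad ≤ volume (Set.Ioc (0:ℝ) 1) := measure_mono fun x hx => hx.1
      _ = 1 := by simp
  have hcase : c * (δ ^ 2 * n) < C' * l →
      volume bad < ENNReal.ofReal (Real.exp (-c * δ ^ 2 * n + C' * l)) := by
    intro hlt
    refine htriv.trans_lt ?_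
    rw [← ENNReal.ofReal_one, ENNReal.ofReal_lt_ofReal_iff (Real.exp_pos _), Real.one_lt_exp_iff]
    linarith
  have hMb : |M| ≤ S * n := by
    have := intervalIntegral.norm_integral_le_of_norm_le_const (a := (0:ℝ)) (b := 1) (f := L)
      (C := S * n) fun x _ => hLb x
    simpa using this
  by_cases hδS : 2 * S < δ
  · have : bad = ∅ := by
      rw [Set.eq_empty_iff_forall_notMem]
      intro x hx
      have h1 := hbad' x hx
      have h2 := abs_sub (L x) M
      have h3 := hLb x
      nlinarith
    rw [this, measure_empty]
    exact ENNReal.ofReal_pos.2 (Real.exp_pos _)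
  push Not at hδS
  have hl0 : 0 < l := by linarith
  have hSQc : 0 < 32 * S * Q * c := by positivity
  set K := ⌊δ * n / (4 * S)⌋₊ with hK
  have hKle : (K:ℝ) ≤ δ * n / (4 * S) := Nat.floor_le (by positivity)
  have hKlt : δ * n / (4 * S) < K + 1 := Nat.lt_floor_add_one _
  rw [le_div_iff₀ (by positivity)] at hKle
  rw [div_lt_iff₀ (by positivity)] at hKlt
  rcases Nat.eq_zero_or_pos K with hK0 | hK0
  · refine hcase ?_
    rw [hK0] at hKlt
    have h1 : δ ^ 2 * n ≤ 16 * S ^ 2 := by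
      have h2 : δ * n < 4 * S := by simpa using hKlt
      have h3 : (δ * n) ^ 2 ≤ (4 * S) ^ 2 := by gcongr
      nlinarith [sq_nonneg δ, mul_nonneg (sq_nonneg δ) hn0.le]
    have h4 : 16 * S ^ 2 * c ≤ 16 * S ^ 2 * c * l := le_mul_of_one_le_right (by positivity)
      (by linarith)
    calc c * (δ ^ 2 * n) ≤ c * (16 * S ^ 2) := by gcongr
      _ ≤ 16 * S ^ 2 * c * l := by linarith
      _ < C' * l := by
          gcongr
          rw [hC']
          linarith
  have hK1 : (1:ℝ) ≤ K := by exact_mod_cast hK0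
  have hKlow : δ * n ≤ K * (8 * S) := by nlinarith
  have hKn : K ≤ n := by
    have : (K:ℝ) ≤ n := by nlinarith
    exact_mod_cast this
  by_cases hQl : K * δ / 4 < Q * l
  · refine hcase ?_
    have h1 : δ ^ 2 * n ≤ 32 * S * (Q * l) := by nlinarith
    calc c * (δ ^ 2 * n) ≤ c * (32 * S * (Q * l)) := by gcongr
      _ = 32 * S * Q * c * l := by ring
      _ < C' * l := by
          gcongr
          rw [hC']
          have : 0 < 16 * S ^ 2 * c := by positivity
          linarith
  push Not at hQl
  obtain ⟨hup, hlow⟩ := hdev ι hN P n D hn hDn hPD L hLc hLp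
    (fun x => (hLb x).trans (by nlinarith)) hPU hPL K hK0 hKn
  set lam := K * δ / (2 * C₁) with hlam
  have hlam0 : 0 ≤ lam := by positivity
  have hlamD : lam * D ≤ K * δ * n / 2 := by
    calc lam * D ≤ lam * (C₁ * n) := by gcongr
      _ = _ := by rw [hlam]; field_simp
  have hQn : n * (Q * l) ≤ K * δ * n / 4 := by nlinarith
  have hsub : bad ⊆ {x ∈ Set.Ioc (0:ℝ) 1 | ∑ k ∈ Finset.range K, L (x + k * ω) <
      K * M - n * (Q * l) - lam * D} := by
    intro x hx
    refine ⟨hx.1, ?_⟩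
    have h1 := hbad' x hx
    have h2 := abs_le.1 (abs_orbit_sum_sub_le (by linarith) hinc x K)
    have h3 := hup x
    have h4 : K * (K * S) ≤ K * (δ * n / 4) := by gcongr; linarith
    have h5 : 0 < K * (δ * n) := by positivity
    rcases lt_abs.1 h1 with h6 | h6
    · have h7 : K * (δ * n) < K * (L x - M) := by gcongr
      nlinarith
    · have h7 : K * (δ * n) < K * (-(L x - M)) := by gcongr
      nlinarith
  calc volume bad ≤ _ := measure_mono hsub
    _ ≤ _ := hlow lam hlam0
    _ < _ := by
        rw [ENNReal.ofReal_lt_ofReal_iff (Real.exp_pos _)]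
        have e1 : K * D * (3 * Real.exp (-lam)) ≤ n * (C₁ * n) * (3 * Real.exp (-lam)) := by
          have : (K:ℝ) ≤ n := by exact_mod_cast hKn
          gcongr
        have e2 : n * (C₁ * n) * (3 * Real.exp (-lam)) =
            Real.exp (Real.log (3 * C₁) + 2 * Real.log n - lam) := by
          rw [sub_eq_add_neg, Real.exp_add, Real.exp_add, Real.exp_log (by linarith),
            show 2 * Real.log n = (2:ℕ) * Real.log n by norm_num, Real.exp_nat_mul,
            Real.exp_log hn0]
          ring
        refine e1.trans_lt ?_
        rw [e2, Real.exp_lt_exp]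
        have e3 : c * δ ^ 2 * n ≤ lam := by
          rw [hc, hlam, div_mul_eq_mul_div, div_mul_eq_mul_div, div_le_div_iff₀ (by positivity)
            (by positivity)]
          have : δ * (δ * n) ≤ δ * (K * (8 * S)) := by gcongr
          nlinarith
        have e4 : Real.log (3 * C₁) ≤ Real.log (3 * C₁) * l :=
          le_mul_of_one_le_right hl3 (by linarith)
        have e5 : 0 < (16 * S ^ 2 * c + 32 * S * Q * c + 1) * l := by positivity
        have e6 : C' * l = Real.log (3 * C₁) * l + 2 * l +
            (16 * S ^ 2 * c + 32 * S * Q * c + 1) * l := by rw [hC']; ring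
        linarith

/-! ### Operator norms and compound matrices -/

section Compound

variable {K : Type*} [RCLike K] {m n : Type*} [Fintype m] [Fintype n] [DecidableEq n]

lemma norm_entry_le_matOpNorm (M : Matrix m n K) (i : m) (j : n) : ‖M i j‖ ≤ matOpNorm M := by
  have h1 := (LinearMap.toContinuousLinearMap (Matrix.toEuclideanLin M)).le_opNorm
    (EuclideanSpace.single j (1:K))
  rw [PiLp.norm_single, norm_one, mul_one] at h1
  refine le_trans ?_ h1
  refine le_trans (le_of_eq ?_) (PiLp.norm_apply_le _ i)
  simp [Matrix.toLpLin_apply]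

lemma matOpNorm_nonneg (M : Matrix m n K) : 0 ≤ matOpNorm M := norm_nonneg _

lemma matOpNorm_le_sum (M : Matrix m n K) : matOpNorm M ≤ ∑ i, ∑ j, ‖M i j‖ := by
  classical
  refine ContinuousLinearMap.opNorm_le_bound _ (by positivity) fun v => ?_
  set w := LinearMap.toContinuousLinearMap (Matrix.toEuclideanLin M) v with hw
  have hwi : ∀ i, w i = ∑ j, M i j * v j := fun i => by
    simp [hw, Matrix.toLpLin_apply, Matrix.mulVec, dotProduct]
  have h1 : ‖w‖ ≤ ∑ i, ‖w i‖ := by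
    have e : w = ∑ i, EuclideanSpace.single i (w i) := by
      ext k
      simp [Finset.sum_apply]
    calc ‖w‖ = ‖∑ i, EuclideanSpace.single i (w i)‖ := by rw [← e]
      _ ≤ ∑ i, ‖EuclideanSpace.single i (w i)‖ := norm_sum_le _ _
      _ = _ := by simp
  refine h1.trans ?_
  rw [Finset.sum_mul]
  refine Finset.sum_le_sum fun i _ => ?_
  rw [hwi, Finset.sum_mul]
  refine (norm_sum_le _ _).trans (Finset.sum_le_sum fun j _ => ?_)
  rw [norm_mul]
  gcongr
  exact PiLp.norm_apply_le v j

lemma matOpNorm_le_card (M : Matrix m n K) {R : ℝ} (h : ∀ i j, ‖M i j‖ ≤ R) :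
    matOpNorm M ≤ Fintype.card (m × n) * R := by
  refine (matOpNorm_le_sum M).trans ?_
  calc _ ≤ ∑ i : m, ∑ j : n, R := Finset.sum_le_sum fun i _ => Finset.sum_le_sum fun j _ => h i j
    _ = _ := by simp [Fintype.card_prod, mul_assoc]

lemma continuous_matOpNorm : Continuous (matOpNorm : Matrix m n K → ℝ) := by
  have : Continuous ((LinearMap.toContinuousLinearMap.toLinearMap ∘ₗ
      (Matrix.toEuclideanLin : Matrix m n K ≃ₗ[K] _).toLinearMap) :
        Matrix m n K →ₗ[K] (EuclideanSpace K n →L[K] EuclideanSpace K m)) :=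
    LinearMap.continuous_of_finiteDimensional _
  exact this.norm

variable {d p : ℕ}

lemma continuous_compound : Continuous (compound p : Matrix (Fin d) (Fin d) K → _) := by
  refine continuous_pi fun s => continuous_pi fun t => ?_
  exact (continuous_id.matrix_submatrix _ _).matrix_det

lemma exists_sorted {φ : Fin p → Fin d} (hφ : Function.Injective φ) :
    ∃ (s : {s : Finset (Fin d) // s.card = p}) (σ : Equiv.Perm (Fin p)),
      ∀ i, φ i = (s.1.orderIsoOfFin s.2 (σ i) : Fin d) := by
  classical
  set s : {s : Finset (Fin d) // s.card = p} :=
    ⟨Finset.univ.image φ, by rw [Finset.card_image_of_injective _ hφ]; simp⟩ with hs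
  have hmem : ∀ i, φ i ∈ s.1 := fun i => Finset.mem_image_of_mem φ (Finset.mem_univ i)
  let f : Fin p → Fin p := fun i => (s.1.orderIsoOfFin s.2).symm ⟨φ i, hmem i⟩
  have hf : Function.Injective f := fun i j hij => by
    have := (s.1.orderIsoOfFin s.2).symm.injective hij
    exact hφ (congrArg Subtype.val this)
  refine ⟨s, Equiv.ofBijective f (Finite.injective_iff_bijective.1 hf), fun i => ?_⟩
  simp [f]

/-- A minor for arbitrary row and column maps vanishes or is, up to sign, an entry of the compound
matrix. -/
lemma norm_minor_le (M : Matrix (Fin d) (Fin d) K) (φ ψ : Fin p → Fin d) :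
    ‖(M.submatrix φ ψ).det‖ ≤ matOpNorm (compound p M) := by
  by_cases hφ : Function.Injective φ
  swap
  · rw [Function.Injective] at hφ
    push Not at hφ
    obtain ⟨i, j, hij, hne⟩ := hφ
    rw [Matrix.det_zero_of_row_eq hne (by ext k; simp [hij]), norm_zero]
    exact matOpNorm_nonneg _
  by_cases hψ : Function.Injective ψ
  swap
  · rw [Function.Injective] at hψ
    push Not at hψ
    obtain ⟨i, j, hij, hne⟩ := hψ
    rw [Matrix.det_zero_of_column_eq hne (by intro k; simp [hij]), norm_zero]
    exact matOpNorm_nonneg _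
  obtain ⟨s, σ, hσ⟩ := exists_sorted hφ
  obtain ⟨t, τ, hτ⟩ := exists_sorted hψ
  have e : M.submatrix φ ψ = ((M.submatrix (fun i => (s.1.orderIsoOfFin s.2 i : Fin d))
      (fun i => (t.1.orderIsoOfFin t.2 i : Fin d))).submatrix σ id).submatrix id τ := by
    ext i j
    simp [hσ, hτ]
  have hsign : ∀ σ : Equiv.Perm (Fin p), ‖((Equiv.Perm.sign σ : ℤ) : K)‖ = 1 := fun σ => by
    rcases Int.units_eq_one_or (Equiv.Perm.sign σ) with h | h <;> simp [h]
  rw [e, Matrix.det_permute', Matrix.det_permute, norm_mul, norm_mul, hsign, hsign, one_mul,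
    one_mul]
  exact norm_entry_le_matOpNorm (compound p M) s t

lemma det_submatrix_mul (B M : Matrix (Fin d) (Fin d) K) (φ ψ : Fin p → Fin d) :
    ((B * M).submatrix φ ψ).det =
      ∑ χ : Fin p → Fin d, (∏ i, B (φ i) (χ i)) * (M.submatrix χ ψ).det := by
  have e : (B * M).submatrix φ ψ =
      Matrix.of fun i => ∑ k : Fin d, B (φ i) k • (fun j => M k (ψ j)) := by
    ext i j
    simp [Matrix.mul_apply, Finset.sum_apply]
  have h1 := (Matrix.detRowAlternating (n := Fin p) (R := K)).toMultilinearMap.map_sum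
    (fun i k => B (φ i) k • (fun j => M k (ψ j)))
  rw [e]
  refine h1.trans (Finset.sum_congr rfl fun χ _ => ?_)
  exact MultilinearMap.map_smul_univ _ (fun i => B (φ i) (χ i)) fun i j => M (χ i) (ψ j)

lemma norm_minor_mul_left_le (B M : Matrix (Fin d) (Fin d) K) {R T : ℝ} (hR : ∀ i j, ‖B i j‖ ≤ R)
    (φ ψ : Fin p → Fin d) (hT : ∀ χ : Fin p → Fin d, ‖(M.submatrix χ ψ).det‖ ≤ T) :
    ‖((B * M).submatrix φ ψ).det‖ ≤ (d * R) ^ p * T := by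
  rw [det_submatrix_mul]
  calc _ ≤ ∑ χ : Fin p → Fin d, ‖(∏ i, B (φ i) (χ i)) * (M.submatrix χ ψ).det‖ := norm_sum_le _ _
    _ ≤ ∑ χ : Fin p → Fin d, R ^ p * T := by
        refine Finset.sum_le_sum fun χ _ => ?_
        rw [norm_mul, norm_prod]
        have h1 : ∏ i, ‖B (φ i) (χ i)‖ ≤ R ^ p := by
          calc _ ≤ ∏ i : Fin p, R := Finset.prod_le_prod (fun _ _ => norm_nonneg _) fun i _ => hR _ _
            _ = _ := by simp
        have h2 := hT χ
        have h3 : 0 ≤ ∏ i, ‖B (φ i) (χ i)‖ := Finset.prod_nonneg fun _ _ => norm_nonneg _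
        exact mul_le_mul h1 h2 (norm_nonneg _) (h3.trans h1)
    _ = _ := by
        simp [mul_pow]
        ring

/-- The number of entries of the `p`-th compound of a `d × d` matrix. -/
def minorCount (d p : ℕ) : ℕ :=
  Fintype.card ({s : Finset (Fin d) // s.card = p} × {s : Finset (Fin d) // s.card = p})

lemma compound_mul_left_le (B M : Matrix (Fin d) (Fin d) K) {R : ℝ} (hR : ∀ i j, ‖B i j‖ ≤ R) :
    matOpNorm (compound p (B * M)) ≤
      minorCount d p * (d * R) ^ p * matOpNorm (compound p M) := by
  rw [mul_assoc]
  exact matOpNorm_le_card _ fun s t => norm_minor_mul_left_le B M hR _ _ fun χ => norm_minor_le M _ _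

lemma compound_mul_right_le (B M : Matrix (Fin d) (Fin d) K) {R : ℝ} (hR : ∀ i j, ‖B i j‖ ≤ R) :
    matOpNorm (compound p (M * B)) ≤
      minorCount d p * (d * R) ^ p * matOpNorm (compound p M) := by
  rw [mul_assoc]
  refine matOpNorm_le_card _ fun s t => ?_
  rw [compound, ← Matrix.det_transpose, Matrix.transpose_submatrix, Matrix.transpose_mul]
  refine norm_minor_mul_left_le _ _ (fun i j => hR j i) _ _ fun χ => ?_
  rw [← Matrix.transpose_submatrix, Matrix.det_transpose]
  exact norm_minor_le M _ _

lemma minorCount_pos (hp : p ≤ d) : 0 < minorCount d p := by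
  have h : Nonempty {s : Finset (Fin d) // s.card = p} := by
    obtain ⟨s, -, hs⟩ := Finset.exists_subset_card_eq (s := (Finset.univ : Finset (Fin d))) (n := p)
      (by simpa using hp)
    exact ⟨⟨s, hs⟩⟩
  exact Fintype.card_pos

lemma one_le_compound_one (hp : p ≤ d) :
    1 ≤ matOpNorm (compound p (1 : Matrix (Fin d) (Fin d) K)) := by
  have h := norm_minor_le (1 : Matrix (Fin d) (Fin d) K) (Fin.castLE hp) (Fin.castLE hp)
  rwa [Matrix.submatrix_one _ (Fin.castLE_injective hp), Matrix.det_one, norm_one] at h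

lemma compound_one_le :
    matOpNorm (compound p (1 : Matrix (Fin d) (Fin d) K)) ≤ minorCount d p * p.factorial := by
  refine matOpNorm_le_card _ fun s t => ?_
  have h := Matrix.det_le (A := (1 : Matrix (Fin d) (Fin d) K).submatrix
    (fun i => (s.1.orderIsoOfFin s.2 i : Fin d)) (fun i => (t.1.orderIsoOfFin t.2 i : Fin d)))
    (abv := IsAbsoluteValue.toAbsoluteValue (norm : K → ℝ)) (x := 1) ?_
  · simpa [compound] using h
  · intro i j
    rw [Matrix.submatrix_apply, Matrix.one_apply]
    split_ifs <;> simp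

end Compound

/-! ### Matrix products along an orbit -/

section Products

variable {K : Type*} [RCLike K] {d p : ℕ}

/-- The ordered product `f (n-1) ⋯ f 1 f 0`. -/
def revProd {R : Type*} [Monoid R] (f : ℕ → R) : ℕ → R
  | 0 => 1
  | n + 1 => f n * revProd f n

lemma revProd_succ' {R : Type*} [Monoid R] (f : ℕ → R) (n : ℕ) :
    revProd f (n + 1) = revProd (fun j => f (j + 1)) n * f 0 := by
  induction n with
  | zero => simp [revProd]
  | succ n ih => rw [revProd, ih, revProd, mul_assoc]

lemma map_revProd {R R' : Type*} [Monoid R] [Monoid R'] (φ : R →* R') (f : ℕ → R) (n : ℕ) :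
    φ (revProd f n) = revProd (fun j => φ (f j)) n := by
  induction n with
  | zero => simp [revProd]
  | succ n ih => rw [revProd, map_mul, ih, revProd]

lemma cocycle_eq_revProd {ε : Type*} (A : ℝ → ε → Matrix (Fin d) (Fin d) K) (ω : ℝ) (n : ℕ) (x : ℝ)
    (e : ε) : cocycle A ω n x e = revProd (fun j => A (x + (j + 1 : ℕ) * ω) e) n := by
  induction n with
  | zero => simp [cocycle, revProd]
  | succ n ih =>
    rw [revProd, ← ih, cocycle, cocycle, List.range_succ, List.reverse_append]
    simp

/-- An upper bound for the factor by which multiplication by a matrix with entries at most `R` in norm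
can increase the norm of the `p`-th compound. -/
def growth (d p : ℕ) (R : ℝ) : ℝ := minorCount d p * (d * R) ^ p

lemma compound_revProd_le (f : ℕ → Matrix (Fin d) (Fin d) K) {R : ℝ} (hR0 : 0 ≤ R)
    (hR : ∀ k i j, ‖f k i j‖ ≤ R) (n : ℕ) :
    matOpNorm (compound p (revProd f n)) ≤
      growth d p R ^ n * (minorCount d p * p.factorial) := by
  induction n with
  | zero => simpa [revProd] using compound_one_le
  | succ n ih =>
    rw [revProd, pow_succ']
    refine (compound_mul_left_le _ _ (hR n)).trans ?_
    rw [mul_assoc (growth d p R), growth]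
    rw [growth] at ih
    gcongr

lemma le_compound_revProd (hp : p ≤ d) (f : ℕ → Matrix (Fin d) (Fin d) K) (hf : ∀ k, IsUnit (f k))
    {R : ℝ} (hR0 : 0 ≤ R) (hR : ∀ k i j, ‖(f k)⁻¹ i j‖ ≤ R) (n : ℕ) :
    1 ≤ growth d p R ^ n * matOpNorm (compound p (revProd f n)) := by
  induction n with
  | zero => simpa [revProd] using one_le_compound_one hp
  | succ n ih =>
    refine ih.trans ?_
    have e : revProd f n = (f n)⁻¹ * revProd f (n + 1) := by
      rw [revProd, ← mul_assoc, Matrix.nonsing_inv_mul _ ((Matrix.isUnit_iff_isUnit_det _).1 (hf n)),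
        one_mul]
    have h1 := compound_mul_left_le (p := p) (f n)⁻¹ (revProd f (n + 1)) (hR n)
    rw [← e] at h1
    rw [pow_succ, mul_assoc]
    have : 0 ≤ growth d p R := by rw [growth]; positivity
    gcongr
    exact h1

lemma norm_rcToComplex (z : K) : ‖rcToComplex z‖ = ‖z‖ := by
  have h1 : ‖rcToComplex z‖ ^ 2 = ‖z‖ ^ 2 := by
    rw [Complex.sq_norm, RCLike.norm_sq_eq_def, Complex.normSq_apply]
    rfl
  exact (pow_left_inj₀ (norm_nonneg _) (norm_nonneg _) two_ne_zero).1 h1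

/-- `rcToComplex` as a ring homomorphism. -/
def rcHom (K : Type*) [RCLike K] : K →+* ℂ where
  toFun := rcToComplex
  map_one' := by apply Complex.ext <;> simp [rcToComplex]
  map_zero' := by apply Complex.ext <;> simp [rcToComplex]
  map_mul' x y := by apply Complex.ext <;> simp [rcToComplex]
  map_add' x y := by apply Complex.ext <;> simp [rcToComplex]

lemma compound_map (M : Matrix (Fin d) (Fin d) K)
    (s t : {s : Finset (Fin d) // s.card = p}) :
    compound p (M.map rcToComplex) s t = rcToComplex (compound p M s t) := by
  have := (rcHom K).map_det (M.submatrix (fun i => (s.1.orderIsoOfFin s.2 i : Fin d))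
    (fun i => (t.1.orderIsoOfFin t.2 i : Fin d)))
  exact this.symm

lemma differentiableOn_revProd {U : Set ℂ} (f : ℕ → ℂ → Matrix (Fin d) (Fin d) ℂ)
    (hf : ∀ k i j, DifferentiableOn ℂ (fun z => f k z i j) U) (n : ℕ) (i j : Fin d) :
    DifferentiableOn ℂ (fun z => revProd (fun k => f k z) n i j) U := by
  induction n generalizing i j with
  | zero => exact differentiableOn_const _
  | succ n ih =>
    simp only [revProd, Matrix.mul_apply]
    exact DifferentiableOn.fun_sum fun k _ => (hf n i k).mul (ih k j)

lemma differentiableOn_compound {U : Set ℂ} (G : ℂ → Matrix (Fin d) (Fin d) ℂ)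
    (hG : ∀ i j, DifferentiableOn ℂ (fun z => G z i j) U)
    (s t : {s : Finset (Fin d) // s.card = p}) :
    DifferentiableOn ℂ (fun z => compound p (G z) s t) U := by
  simp only [compound, Matrix.det_apply]
  refine DifferentiableOn.fun_sum fun σ _ => DifferentiableOn.fun_const_smul ?_ _
  exact DifferentiableOn.fun_finsetProd fun i _ => hG _ _

end Products

/-- **Large Deviation Theorem for exterior powers.** Under the same hypotheses as the LDT,
for every `1 ≤ p ≤ d` there are positive constants `c, C, b`, depending only on `A` and `ω`,
such that for every `δ > 0`, `E ∈ ℰ`, `n ≥ 2`,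
`|{x ∈ 𝕋 : |(1/n)log‖Λ^p A^{(n)}_x(E)‖ − Σ_{i=1}^p λ_{i,n}(E)| > δ}|
  < exp(−cδ²n + C(log n)^b)`. -/
theorem large_deviation_theorem_exterior_powers
    {K : Type*} [RCLike K] {d : ℕ} {ε : Type*} [MetricSpace ε] [CompactSpace ε]
    (ω a : ℝ) (ha : 1 < a) (hdio : Diophantine ω a)
    (A : ℝ → ε → Matrix (Fin d) (Fin d) K)
    (hcont : Continuous fun q : ℝ × ε => A q.1 q.2)
    (hper : ∀ x e, A (x + 1) e = A x e)
    (hinv : ∀ x e, IsUnit (A x e))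
    (hanal : AnalyticOnStrip A)
    (hbinv : ∃ M : ℝ, ∀ (x : ℝ) (e : ε), matOpNorm (A x e)⁻¹ ≤ M) :
    ∀ p : ℕ, 1 ≤ p → p ≤ d →
      ∃ c > (0:ℝ), ∃ C > (0:ℝ), ∃ b > (0:ℝ), ∀ δ > (0:ℝ), ∀ (e : ε) (n : ℕ), 2 ≤ n →
        MeasureTheory.volume {x ∈ Set.Ioc (0:ℝ) 1 |
            δ < |(1 / n : ℝ) * Real.log (matOpNorm (compound p (cocycle A ω n x e))) -
              sumLyapFin A ω p n e|} <
          ENNReal.ofReal (Real.exp (-c * δ ^ 2 * n + C * Real.log n ^ b)) := by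
  intro p hp1 hpd
  obtain ⟨ρ, hρ, F, hFd, hFp, hFA, M₁, hM₁⟩ := hanal
  obtain ⟨M₂, hM₂⟩ := hbinv
  set R := max 1 (max M₁ M₂) with hR
  have hR1 : 1 ≤ R := le_max_left _ _
  have hRF : ∀ (z : ℂ), |z.im| < ρ → ∀ e i j, ‖F z e i j‖ ≤ R := fun z hz e i j =>
    (norm_entry_le_matOpNorm _ i j).trans ((hM₁ z hz e).trans
      ((le_max_left _ _).trans (le_max_right _ _)))
  have hRA : ∀ x e i j, ‖A x e i j‖ ≤ R := fun x e i j => by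
    have := hRF x (by simpa using hρ) e i j
    rwa [hFA, Matrix.map_apply, norm_rcToComplex] at this
  have hRi : ∀ x e i j, ‖(A x e)⁻¹ i j‖ ≤ R := fun x e i j =>
    (norm_entry_le_matOpNorm _ i j).trans ((hM₂ x e).trans
      ((le_max_right _ _).trans (le_max_right _ _)))
  set N := minorCount d p with hN
  have hN1 : (1:ℝ) ≤ N := by exact_mod_cast minorCount_pos hpd
  set W : ℝ := N * p.factorial with hW
  have hW1 : 1 ≤ W := one_le_mul_of_one_le_of_one_le hN1 (by exact_mod_cast p.factorial_pos)
  set κ := growth d p R with hκ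
  have hκ1 : 1 ≤ κ := by
    have hd : (1:ℝ) ≤ d := by exact_mod_cast hp1.trans hpd
    exact one_le_mul_of_one_le_of_one_le hN1
      (one_le_pow₀ (one_le_mul_of_one_le_of_one_le hd hR1))
  have hlκ := Real.log_nonneg hκ1
  have hlW := Real.log_nonneg hW1
  have hlN := Real.log_nonneg hN1
  set S := 1 + 2 * Real.log κ + Real.log W + Real.log N with hS
  have hS1 : 1 ≤ S := by linarith
  obtain ⟨c, hc, C, hC, hmain⟩ := scalar_ldt ha hdio hρ hS1 N
  refine ⟨c, hc, C, hC, a + 2, by linarith, ?_⟩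
  intro δ hδ e n hn
  have hn2 : (2:ℝ) ≤ n := by exact_mod_cast hn
  set L : ℝ → ℝ := fun x => Real.log (matOpNorm (compound p (cocycle A ω n x e))) with hL
  have hlow : ∀ x, 1 ≤ κ ^ n * matOpNorm (compound p (cocycle A ω n x e)) := fun x => by
    rw [cocycle_eq_revProd]
    exact le_compound_revProd hpd _ (fun _ => hinv _ _) (by linarith) (fun _ => hRi _ _) n
  have hpos : ∀ x, 0 < matOpNorm (compound p (cocycle A ω n x e)) := fun x => by
    refine lt_of_le_of_ne (matOpNorm_nonneg _) fun h0 => ?_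
    have := hlow x
    rw [← h0] at this
    norm_num at this
  have hexpL : ∀ x, Real.exp (L x) = matOpNorm (compound p (cocycle A ω n x e)) := fun x =>
    Real.exp_log (hpos x)
  have hκn : κ ^ n = Real.exp (n * Real.log κ) := by
    rw [Real.exp_nat_mul, Real.exp_log (by linarith)]
  have hWn : κ ^ n * W ≤ Real.exp (S * n) := by
    rw [hκn, ← Real.exp_log (show 0 < W by linarith), ← Real.exp_add, Real.exp_le_exp, hS]
    nlinarith
  have hAc : ∀ j : ℕ, Continuous fun x : ℝ => A (x + (j + 1 : ℕ) * ω) e := fun j =>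
    hcont.comp (f := fun x : ℝ => (x + (j + 1 : ℕ) * ω, e)) (by fun_prop)
  have hcoc : Continuous fun x => cocycle A ω n x e := by
    simp only [cocycle_eq_revProd]
    clear hn hn2 hL L hlow hpos hexpL hκn hWn
    induction n with
    | zero => exact continuous_const
    | succ n ih =>
      simp only [revProd]
      exact (hAc n).mul ih
  -- `Λ^p A^{(n)}` at `x + ω` and at `x` differ by one factor on either side
  have hshift : ∀ x, cocycle A ω n (x + ω) e * A (x + ω) e =
      A (x + (n + 1 : ℕ) * ω) e * cocycle A ω n x e := by
    intro x
    have h1 := revProd_succ' (fun j : ℕ => A (x + (j + 1 : ℕ) * ω) e) n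
    rw [revProd, ← cocycle_eq_revProd] at h1
    rw [h1, cocycle_eq_revProd]
    have e1 : ∀ j : ℕ, x + ω + ((j + 1 : ℕ) : ℝ) * ω = x + ((j + 1 + 1 : ℕ) : ℝ) * ω := by
      intro j
      push_cast
      ring
    have e2 : x + ω = x + ((0 + 1 : ℕ) : ℝ) * ω := by push_cast; ring
    simp only [e1, ← e2]
  have hdet : ∀ x, IsUnit (A x e).det := fun x => (Matrix.isUnit_iff_isUnit_det _).1 (hinv x e)
  have hL1 : ∀ x, L (x + ω) ≤ L x + 2 * Real.log κ := by
    intro x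
    have h1 : cocycle A ω n (x + ω) e =
        A (x + (n + 1 : ℕ) * ω) e * cocycle A ω n x e * (A (x + ω) e)⁻¹ := by
      rw [← hshift, mul_assoc, Matrix.mul_nonsing_inv _ (hdet _), mul_one]
    have h2 := compound_mul_right_le (p := p) (A (x + ω) e)⁻¹
      (A (x + (n + 1 : ℕ) * ω) e * cocycle A ω n x e) (hRi _ e)
    have h3 := compound_mul_left_le (p := p) (A (x + (n + 1 : ℕ) * ω) e) (cocycle A ω n x e)
      (hRA _ e)
    rw [← h1] at h2
    have h4 : Real.exp (L (x + ω)) ≤ Real.exp (L x + 2 * Real.log κ) := by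
      rw [Real.exp_add, two_mul, Real.exp_add, hexpL, hexpL, Real.exp_log (show 0 < κ by linarith)]
      calc _ ≤ κ * _ := h2
        _ ≤ κ * (κ * matOpNorm (compound p (cocycle A ω n x e))) := by gcongr; exact h3
        _ = _ := by ring
    exact Real.exp_le_exp.1 h4
  have hL2 : ∀ x, L x ≤ L (x + ω) + 2 * Real.log κ := by
    intro x
    have h1 : cocycle A ω n x e =
        (A (x + (n + 1 : ℕ) * ω) e)⁻¹ * (cocycle A ω n (x + ω) e * A (x + ω) e) := by
      rw [hshift, ← mul_assoc, Matrix.nonsing_inv_mul _ (hdet _), one_mul]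
    have h2 := compound_mul_left_le (p := p) (A (x + (n + 1 : ℕ) * ω) e)⁻¹
      (cocycle A ω n (x + ω) e * A (x + ω) e) (hRi _ e)
    have h3 := compound_mul_right_le (p := p) (A (x + ω) e) (cocycle A ω n (x + ω) e) (hRA _ e)
    rw [← h1] at h2
    have h4 : Real.exp (L x) ≤ Real.exp (L (x + ω) + 2 * Real.log κ) := by
      rw [Real.exp_add, two_mul, Real.exp_add, hexpL, hexpL, Real.exp_log (show 0 < κ by linarith)]
      calc _ ≤ κ * _ := h2
        _ ≤ κ * (κ * matOpNorm (compound p (cocycle A ω n (x + ω) e))) := by gcongr; exact h3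
        _ = _ := by ring
    exact Real.exp_le_exp.1 h4
  -- the holomorphic extension of the cocycle
  set G : ℂ → Matrix (Fin d) (Fin d) ℂ :=
    fun z => revProd (fun j => F (z + (j + 1 : ℕ) * ω) e) n with hG
  have him : ∀ (z : ℂ) (j : ℕ), (z + (j + 1 : ℕ) * ω : ℂ).im = z.im := fun z j => by simp
  have hGreal : ∀ x : ℝ, G x = (cocycle A ω n x e).map rcToComplex := by
    intro x
    have h1 := map_revProd ((rcHom K).mapMatrix (m := Fin d)).toMonoidHom
      (fun j => A (x + (j + 1 : ℕ) * ω) e) n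
    rw [cocycle_eq_revProd]
    refine Eq.trans ?_ h1.symm
    refine congrArg (fun f => revProd f n) ?_
    funext j
    have h2 := hFA (x + (j + 1 : ℕ) * ω) e
    push_cast at h2 ⊢
    exact h2
  have key := hmain ({s : Finset (Fin d) // s.card = p} × {s : Finset (Fin d) // s.card = p})
    le_rfl n hn L ?_ ?_ ?_ ?_ (fun q z => compound p (G z) q.1 q.2) ?_ ?_ ?_ ?_ ?_ δ hδ
  · exact key
  · exact ((continuous_matOpNorm.comp (continuous_compound.comp hcoc))).log fun x => (hpos x).ne'
  · intro x
    simp only [hL, cocycle_eq_revProd, add_right_comm x 1, hper]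
  · intro x
    rw [abs_le]
    constructor
    · have h1 : 0 ≤ n * Real.log κ + L x := by
        rw [← Real.one_le_exp_iff, Real.exp_add, ← hκn, hexpL]
        exact hlow x
      nlinarith
    · rw [← Real.exp_le_exp, hexpL]
      refine le_trans ?_ hWn
      rw [cocycle_eq_revProd]
      exact compound_revProd_le _ (by linarith) (fun _ => hRA _ _) n
  · intro x
    have := hL1 x
    have := hL2 x
    rw [abs_le]
    constructor <;> linarith
  · intro q
    refine differentiableOn_compound G (fun i j => ?_) q.1 q.2
    refine differentiableOn_revProd (fun k z => F (z + (k + 1 : ℕ) * ω) e) (fun k i j => ?_) n i j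
    refine (hFd e i j).comp (f := fun z : ℂ => z + (k + 1 : ℕ) * ω) (by fun_prop) fun z hz => ?_
    simpa [him] using hz
  · intro q z
    simp only [hG, add_right_comm z 1, hFp]
  · intro q z hz
    refine (norm_entry_le_matOpNorm _ _ _).trans (le_trans ?_ hWn)
    exact compound_revProd_le _ (by linarith)
      (fun k => hRF _ (by rw [him]; exact hz) e) n
  · intro q x
    simp only [hGreal, compound_map, norm_rcToComplex]
    rw [Real.exp_add, hexpL]
    exact (norm_entry_le_matOpNorm _ _ _).trans
      (le_mul_of_one_le_right (matOpNorm_nonneg _) (Real.one_le_exp (by linarith)))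
  · intro x
    by_contra! hcon
    have h1 : matOpNorm (compound p (cocycle A ω n x e)) ≤ N * Real.exp (L x - S) := by
      refine matOpNorm_le_card _ fun s t => ?_
      have := hcon (s, t)
      simp only [hGreal, compound_map, norm_rcToComplex] at this
      exact this.le
    rw [← hexpL, ← Real.exp_log (show (0:ℝ) < N by linarith), ← Real.exp_add, Real.exp_le_exp] at h1
    linarith

end
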